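/- Let 𝔾 be a discrete quantum group of Kac type. If L∞(𝔾̂) is an injective von Neumann algebra, then 𝔾 is amenable. -/

import Mathlib

/-!
Common framework: an axiomatization of locally compact quantum groups (in the von Neumann
algebraic setting of Kustermans–Vaes) acting on a Hilbert space `H = L²(𝔾)`.

Since completed Hilbert space tensor products are not available, the tensor square
`H2 = L²(𝔾) ⊗ L²(𝔾)` is axiomatized: a Hilbert space together with a bilinear map
`tmul` with total range satisfying `⟪a ⊗ b, c ⊗ d⟫ = ⟪a, c⟫⟪b, d⟫`, the induced tensor
product of operators `tensorOp`, tensor products `funcTensor` of normal functionals,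
and the slice maps `sliceL = ω ⊗ id`, `sliceR = id ⊗ ω`.

Normal functionals (elements of the predual `B(H)_*`) are characterized concretely:
`ω(x) = ∑ ⟪ηₙ, x ξₙ⟫` with `∑‖ξₙ‖² , ∑‖ηₙ‖² < ∞`.

Membership of an operator `X` on `H2` in a spatial tensor product `P ⊗̄ Q` of von Neumann
algebras is encoded, via the commutation theorem, as: `X` commutes with all `a' ⊗ b'`
with `a' ∈ P'`, `b' ∈ Q'`.

A locally compact quantum group is recorded through its left regular co-representation
`W ∈ L∞(𝔾) ⊗̄ L∞(𝔾̂)` and right regular co-representation `V ∈ L∞(𝔾̂)' ⊗̄ L∞(𝔾)`,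
which implement the co-multiplication: `Δ(x) = W*(1 ⊗ x)W = V(x ⊗ 1)V*` for `x ∈ L∞(𝔾)`;
`Δ̄(x) := W*(1 ⊗ x)W` for arbitrary `x ∈ B(H)` is the canonical normal extension of `Δ`.
-/

noncomputable section

open scoped ComplexOrder ComplexInnerProductSpace

namespace LCQGNote

/-- The bounded operators `B(H)`. -/
abbrev B (H : Type*) [NormedAddCommGroup H] [InnerProductSpace ℂ H] : Type _ := H →L[ℂ] H

variable (H H2 : Type*)
  [NormedAddCommGroup H] [InnerProductSpace ℂ H] [CompleteSpace H]
  [NormedAddCommGroup H2] [InnerProductSpace ℂ H2] [CompleteSpace H2]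

/-- The vector functional `ω_{ξ,η} : x ↦ ⟨x ξ, η⟩` on `B(H)` (written here in the
Mathlib convention for inner products, which are conjugate-linear in the first slot). -/
def vecFunctional (ξ η : H) : B H →ₗ[ℂ] ℂ where
  toFun x := ⟪η, x ξ⟫
  map_add' x y := by simp [inner_add_right]
  map_smul' c x := by simp [inner_smul_right]

/-- A functional on `B(H)` is normal (σ-weakly continuous, i.e. belongs to the predual
`B(H)_*`) iff it has the form `x ↦ ∑ ⟪ηₙ, x ξₙ⟫` with `(ξₙ), (ηₙ)` square-summable. -/
def IsNormalFunctional (ω : B H →ₗ[ℂ] ℂ) : Prop :=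
  ∃ ξ η : ℕ → H, Summable (fun n => ‖ξ n‖ ^ 2) ∧ Summable (fun n => ‖η n‖ ^ 2) ∧
    ∀ x : B H, HasSum (fun n => ⟪η n, x (ξ n)⟫) (ω x)

/-- `φ` is a state of the von Neumann algebra `N ⊆ B(H)`: it is unital and positive on `N`.
(Functionals on `N` are encoded as functionals on `B(H)`; only the restriction to `N`
matters, by the Hahn–Banach extension theorem.) -/
def IsStateOn (N : VonNeumannAlgebra H) (φ : B H →ₗ[ℂ] ℂ) : Prop :=
  φ 1 = 1 ∧ ∀ x : B H, x ∈ N → x.IsPositive → 0 ≤ φ x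

/-- A conditional expectation of `B(H)` onto a von Neumann subalgebra `N`:
a unital positive projection `E : B(H) → B(H)` with range `N`. -/
structure IsConditionalExpectation (N : VonNeumannAlgebra H) (E : B H →ₗ[ℂ] B H) : Prop where
  unital : E 1 = 1
  positive : ∀ x : B H, x.IsPositive → (E x).IsPositive
  mem_range : ∀ x : B H, E x ∈ N
  fixes : ∀ x ∈ N, E x = x

/-- The center of a von Neumann algebra `N`: elements of `N` commuting with all of `N`. -/
def center (N : VonNeumannAlgebra H) : Set (B H) := {z | z ∈ N ∧ ∀ y ∈ N, z * y = y * z}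

/-- A von Neumann algebra `N ⊆ B(H)` is injective if there is a conditional expectation
of `B(H)` onto `N`. -/
def IsInjectiveVNA (N : VonNeumannAlgebra H) : Prop :=
  ∃ E : B H →ₗ[ℂ] B H, IsConditionalExpectation H N E

/-- A locally compact quantum group `𝔾`, axiomatized over its Hilbert space `H = L²(𝔾)`
together with the tensor square `H2 = L²(𝔾) ⊗ L²(𝔾)`.  `M = L∞(𝔾)`, `Mhat = L∞(𝔾̂)`
(both acting canonically on `L²(𝔾)`). -/
structure LCQG where
  /-- `L∞(𝔾)` -/
  M : VonNeumannAlgebra H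
  /-- `L∞(𝔾̂)`, the dual von Neumann algebra, also acting on `L²(𝔾)` -/
  Mhat : VonNeumannAlgebra H
  /-- the tensor map `H × H → H2 = H ⊗ H` -/
  tmul : H →ₗ[ℂ] H →ₗ[ℂ] H2
  tmul_inner : ∀ a b c d : H, ⟪tmul a b, tmul c d⟫ = ⟪a, c⟫ * ⟪b, d⟫
  tmul_total : (Submodule.span ℂ {v : H2 | ∃ a b, v = tmul a b}).topologicalClosure = ⊤
  /-- the tensor product of operators: `tensorOp x y = x ⊗ y` on `H2` -/
  tensorOp : B H →ₗ[ℂ] B H →ₗ[ℂ] B H2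
  tensorOp_apply : ∀ (x y : B H) (a b : H), tensorOp x y (tmul a b) = tmul (x a) (y b)
  /-- the flip (tensor swap) unitary `Σ` on `H2` -/
  flipU : B H2
  flipU_apply : ∀ a b : H, flipU (tmul a b) = tmul b a
  /-- the tensor product `ω ⊗ ρ` of (normal) functionals -/
  funcTensor : (B H →ₗ[ℂ] ℂ) → (B H →ₗ[ℂ] ℂ) → (B H2 →ₗ[ℂ] ℂ)
  funcTensor_elem : ∀ ω ρ (x y : B H), funcTensor ω ρ (tensorOp x y) = ω x * ρ y
  funcTensor_normal : ∀ ω ρ, IsNormalFunctional H ω → IsNormalFunctional H ρ →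
    IsNormalFunctional H2 (funcTensor ω ρ)
  /-- the left slice map `sliceL ω = ω ⊗ id : B(H2) → B(H)` -/
  sliceL : (B H →ₗ[ℂ] ℂ) → B H2 →ₗ[ℂ] B H
  /-- the right slice map `sliceR ω = id ⊗ ω : B(H2) → B(H)` -/
  sliceR : (B H →ₗ[ℂ] ℂ) → B H2 →ₗ[ℂ] B H
  sliceL_char : ∀ ω X (ξ η : H),
    vecFunctional H ξ η (sliceL ω X) = funcTensor ω (vecFunctional H ξ η) X
  sliceR_char : ∀ ω X (ξ η : H),
    vecFunctional H ξ η (sliceR ω X) = funcTensor (vecFunctional H ξ η) ω X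
  /-- the left regular co-representation `W` -/
  W : B H2
  W_unitary_l : star W * W = 1
  W_unitary_r : W * star W = 1
  /-- `W ∈ L∞(𝔾) ⊗̄ L∞(𝔾̂)` (via the commutation theorem for tensor products) -/
  W_mem : ∀ a' ∈ M.commutant, ∀ b' ∈ Mhat.commutant, Commute W (tensorOp a' b')
  /-- the right regular co-representation `V` -/
  V : B H2
  V_unitary_l : star V * V = 1
  V_unitary_r : V * star V = 1
  /-- `V ∈ L∞(𝔾̂)' ⊗̄ L∞(𝔾)` (via the commutation theorem for tensor products) -/
  V_mem : ∀ a ∈ Mhat, ∀ b' ∈ M.commutant, Commute V (tensorOp a b')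
  /-- `Δ` maps `L∞(𝔾)` into `L∞(𝔾) ⊗̄ L∞(𝔾)` -/
  Delta_mem : ∀ x ∈ M, ∀ a' ∈ M.commutant, ∀ b' ∈ M.commutant,
    Commute (star W * tensorOp 1 x * W) (tensorOp a' b')
  /-- `V` also implements the co-multiplication: `Δ(x) = V(x ⊗ 1)V*` on `L∞(𝔾)` -/
  Delta_V : ∀ x ∈ M, star W * tensorOp 1 x * W = V * tensorOp x 1 * star V
  /-- slices of `Δ(x)`, `x ∈ L∞(𝔾)`, lie in `L∞(𝔾)` -/
  slice_Delta_mem : ∀ ω, ∀ x ∈ M, sliceL ω (star W * tensorOp 1 x * W) ∈ M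
  /-- slices `(ω ⊗ id)(V (x ⊗ 1) V*)` lie in `L∞(𝔾)`, since `V ∈ L∞(𝔾̂)' ⊗̄ L∞(𝔾)` -/
  sliceL_rConj_mem : ∀ ω (x : B H), sliceL ω (V * tensorOp x 1 * star V) ∈ M
  /-- the fixed-point characterization `L∞(𝔾̂) = {y : V(y ⊗ 1)V* = y ⊗ 1}`
  (cf. Kustermans–Vaes, proof of Proposition 4.2) -/
  fixedPoint_mem : ∀ y : B H, V * tensorOp y 1 * star V = tensorOp y 1 → y ∈ Mhat

namespace LCQG

variable {H H2} (Q : LCQG H H2)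

/-- The (extended) co-multiplication `Δ̄ : B(L²(𝔾)) → L∞(𝔾) ⊗̄ B(L²(𝔾))`,
`Δ̄(x) = W*(1 ⊗ x)W`; its restriction to `L∞(𝔾)` is the co-multiplication `Δ`. -/
def Delta (x : B H) : B H2 := star Q.W * Q.tensorOp 1 x * Q.W

/-- The map `x ↦ V (x ⊗ 1) V*` on `B(L²(𝔾))`. -/
def rConj : B H →ₗ[ℂ] B H2 where
  toFun x := Q.V * Q.tensorOp x 1 * star Q.V
  map_add' x y := by simp [mul_add, add_mul]
  map_smul' c x := by simp [mul_smul_comm, smul_mul_assoc]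

/-- The left regular co-representation of the dual: `Ŵ = Σ W* Σ` (i.e. `σ(W)*`). -/
def What : B H2 := Q.flipU * star Q.W * Q.flipU

/-- The (extended) co-multiplication of the dual quantum group, `Δ̂(y) = Ŵ*(1 ⊗ y)Ŵ`. -/
def Deltahat (y : B H) : B H2 := star Q.What * Q.tensorOp 1 y * Q.What

/-- `m` is a left-invariant mean on `L∞(𝔾)`: a state with
`m((ω ⊗ id)Δ(x)) = ω(1) m(x)` for all `x ∈ L∞(𝔾)` and normal `ω ∈ L¹(𝔾)`. -/
def IsLeftInvariantMean (m : B H →ₗ[ℂ] ℂ) : Prop :=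
  IsStateOn H Q.M m ∧
    ∀ x ∈ Q.M, ∀ ω : B H →ₗ[ℂ] ℂ, IsNormalFunctional H ω →
      m (Q.sliceL ω (Q.Delta x)) = ω 1 * m x

/-- `𝔾` is amenable if it admits a left-invariant mean. -/
def Amenable : Prop := ∃ m : B H →ₗ[ℂ] ℂ, Q.IsLeftInvariantMean m

/-- `𝔾` is quantum injective if there is a conditional expectation of `B(L²(𝔾))` onto
`L∞(𝔾)` mapping `L∞(𝔾̂)` into the center of `L∞(𝔾)`. -/
def QuantumInjective : Prop :=
  ∃ E : B H →ₗ[ℂ] B H, IsConditionalExpectation H Q.M E ∧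
    ∀ x ∈ Q.Mhat, E x ∈ center H Q.M

end LCQG

/-- A discrete quantum group `𝔾` of Kac type: a locally compact quantum group whose dual
`𝔾̂` is compact — i.e. it possesses a (bi-invariant, normal) Haar state `φ̂` on
`L∞(𝔾̂)` — such that `φ̂` is moreover a trace (Kac type).  The GNS construction of
`(L∞(𝔾̂), φ̂)` is canonically realized on `L²(𝔾)`, with GNS map `Λ = Λ_{φ̂}`. -/
structure DiscreteKacQG extends LCQG H H2 where
  /-- the Haar state `φ̂` of the compact dual `𝔾̂` -/
  phihat : B H →ₗ[ℂ] ℂ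
  phihat_state : IsStateOn H toLCQG.Mhat phihat
  phihat_normal : IsNormalFunctional H phihat
  /-- Kac type: the dual Haar state is a trace -/
  phihat_tracial : ∀ a ∈ toLCQG.Mhat, ∀ b ∈ toLCQG.Mhat, phihat (a * b) = phihat (b * a)
  /-- slices of `Δ̂(y)`, `y ∈ L∞(𝔾̂)`, lie in `L∞(𝔾̂)` -/
  slice_Deltahat_memL : ∀ ω, ∀ y ∈ toLCQG.Mhat, toLCQG.sliceL ω (toLCQG.Deltahat y) ∈ toLCQG.Mhat
  slice_Deltahat_memR : ∀ ω, ∀ y ∈ toLCQG.Mhat, toLCQG.sliceR ω (toLCQG.Deltahat y) ∈ toLCQG.Mhat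
  /-- left invariance of `φ̂`: `φ̂((ω ⊗ id)Δ̂(y)) = ω(1) φ̂(y)` -/
  phihat_left_inv : ∀ y ∈ toLCQG.Mhat, ∀ ω : B H →ₗ[ℂ] ℂ, IsNormalFunctional H ω →
    phihat (toLCQG.sliceL ω (toLCQG.Deltahat y)) = ω 1 * phihat y
  /-- right invariance of `φ̂`: `φ̂((id ⊗ ω)Δ̂(y)) = ω(1) φ̂(y)` -/
  phihat_right_inv : ∀ y ∈ toLCQG.Mhat, ∀ ω : B H →ₗ[ℂ] ℂ, IsNormalFunctional H ω →
    phihat (toLCQG.sliceR ω (toLCQG.Deltahat y)) = ω 1 * phihat y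
  /-- the GNS map `Λ_{φ̂} : L∞(𝔾̂) → L²(𝔾)` -/
  Lam : B H → H
  Lam_inner : ∀ a ∈ toLCQG.Mhat, ∀ b ∈ toLCQG.Mhat, ⟪Lam a, Lam b⟫ = phihat (star a * b)
  Lam_act : ∀ a ∈ toLCQG.Mhat, ∀ b ∈ toLCQG.Mhat, a (Lam b) = Lam (a * b)

/-!
Let `φ̂` be the tracial Haar state of the dual and `E` a conditional expectation of `B(H)` onto
`L∞(𝔾̂)`. Then `m = φ̂ ∘ E` is a hypertrace: `m (a y) = m (y a)` for `a ∈ L∞(𝔾̂)`, `y ∈ B(H)`.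

Fix an orthonormal basis `(e i)` containing a given unit vector `e j`, and let `w i l ∈ L∞(𝔾̂)` be
the coefficients of `W`. Since `Δ y = W⋆ (1 ⊗ y) W`, the slice of `Δ y` by `e j` is
`∑ i, (w i j)⋆ y (w i j)`. For a finite set `F` of indices and `T = ∑ i ∈ F, (w i j) (w i j)⋆`, the
hypertrace property gives `m (∑ i ∈ F, (w i j)⋆ y (w i j)) = m (y T)`. If `T ≤ 1`, then, as `φ̂ T`
tends to `1`, the slice has `m`-value at least `m y` for `y ≥ 0`. Both sides agree at `1`, hence
everywhere. Polarisation and norm convergence extend the equality to all normal functionals, so `m`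
restricts to a left-invariant mean.

To see that `T ≤ 1`, put `δ y = W (y ⊗ 1) W⋆`. The first legs of `∑ i, δ (w i k)⋆ (w i l ⊗ 1)` lie
in `L∞(𝔾) ∩ L∞(𝔾̂) = ℂ`, so these operators are of the form `1 ⊗ s k l`, and
`w i l ⊗ 1 = ∑ k, δ (w i k) (1 ⊗ s k l)`. Applying `id ⊗ φ̂`, traciality moves `s k l` to the left
of `δ (w i k)`, and the Cauchy–Schwarz inequality with the invariance of `φ̂` bounds the row
`((w i j)⋆)` by `1`.
-/

section Exponential

open NormedSpace

variable {A : Type*} [NormedRing A] [NormedAlgebra ℂ A] [CompleteSpace A]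

lemma exp_add_smul (b : A) (z w : ℂ) : exp ((z + w) • b) = exp (z • b) * exp (w • b) := by
  let : NormedAlgebra ℚ A := .restrictScalars ℚ ℂ A
  rw [add_smul, exp_add_of_commute (((Commute.refl b).smul_left z).smul_right w)]

lemma exp_smul_mul_exp_neg_smul (b : A) (z : ℂ) : exp (z • b) * exp (-z • b) = 1 := by
  rw [← exp_add_smul, add_neg_cancel, zero_smul, exp_zero]

lemma exp_neg_smul_mul_exp_smul (b : A) (z : ℂ) : exp (-z • b) * exp (z • b) = 1 := by
  rw [← exp_add_smul, neg_add_cancel, zero_smul, exp_zero]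

end Exponential

section ExponentialStar

open NormedSpace

variable {A : Type*} [CStarAlgebra A]

lemma exp_mul_I_smul_mem_unitary {b : A} (hb : IsSelfAdjoint b) (t : ℝ) :
    exp ((t * Complex.I) • b) ∈ unitary A := by
  let : NormedAlgebra ℚ A := .restrictScalars ℚ ℂ A
  exact exp_mem_unitary_of_mem_skewAdjoint (hb.smul_mem_skewAdjoint (by simp [skewAdjoint.mem_iff]))

lemma isSelfAdjoint_exp_ofReal_smul {b : A} (hb : IsSelfAdjoint b) (s : ℝ) :
    IsSelfAdjoint (exp ((s : ℂ) • b)) :=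
  (IsSelfAdjoint.smul (Complex.conj_ofReal s) hb).exp

end ExponentialStar

section PositiveMaps

open NormedSpace

variable {A A' : Type*} [CStarAlgebra A] [PartialOrder A] [StarOrderedRing A]
  [CStarAlgebra A'] [PartialOrder A'] [StarOrderedRing A']

lemma norm_apply_le_four_mul (f : A →ₚ[ℂ] A') (x : A) : ‖f x‖ ≤ 4 * ‖f 1‖ * ‖x‖ := by
  obtain ⟨y, hy_nonneg, hy_norm, hy⟩ := CStarAlgebra.exists_sum_four_nonneg x
  calc ‖f x‖ = ‖∑ i : Fin 4, Complex.I ^ (i : ℕ) • f (y i)‖ := by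
        conv_lhs => rw [hy]
        simp only [map_sum, map_smul]
    _ ≤ ∑ i : Fin 4, ‖Complex.I ^ (i : ℕ) • f (y i)‖ := norm_sum_le _ _
    _ ≤ ∑ _i : Fin 4, ‖f 1‖ * ‖x‖ := by
        refine Finset.sum_le_sum fun i _ => ?_
        rw [norm_smul, norm_pow, Complex.norm_I, one_pow, one_mul]
        exact (f.norm_apply_le_of_nonneg _ (hy_nonneg i)).trans (by gcongr; exact hy_norm i)
    _ = 4 * ‖f 1‖ * ‖x‖ := by simp [mul_assoc]

lemma norm_mul_apply_mul_mul_le (E : A →ₚ[ℂ] A) {c d : A} (hc : IsSelfAdjoint c)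
    (hd : IsSelfAdjoint d) (hcd : c * d = 1) (hdc : d * c = 1) (hE : E (c * c) = c * c) (x : A) :
    ‖d * E (c * x * c) * d‖ ≤ 4 * ‖x‖ := by
  cases subsingleton_or_nontrivial A
  · simp [Subsingleton.elim _ (0 : A)]
  let f : A →ₚ[ℂ] A := PositiveLinearMap.mk₀
    (LinearMap.mulLeftRight ℂ (d, d) ∘ₗ E.toLinearMap ∘ₗ LinearMap.mulLeftRight ℂ (c, c))
    fun y hy => hd.conjugate_nonneg (E.map_nonneg (hc.conjugate_nonneg hy))
  have hf (y : A) : f y = d * E (c * y * c) * d := rfl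
  have hf_one : f 1 = 1 := by
    rw [hf, mul_one, hE, ← mul_assoc, hdc, one_mul, hcd]
  simpa [hf_one, hf] using norm_apply_le_four_mul f x

variable {S : StarSubalgebra ℂ A} [hS : IsClosed (S : Set A)] {E : A →ₚ[ℂ] A}

lemma norm_exp_neg_mul_apply_mul_exp_neg_le (hE : ∀ a ∈ S, E a = a) {b : A} (hb : b ∈ S)
    (hsa : IsSelfAdjoint b) (x : A) (z : ℂ) :
    ‖exp (-z • b) * E (exp (z • b) * x * exp (z • b)) * exp (-z • b)‖ ≤ 4 * ‖x‖ := by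
  let : NormedAlgebra ℚ A := .restrictScalars ℚ ℂ A
  obtain ⟨s, t, rfl⟩ : ∃ s t : ℝ, z = s + t * Complex.I := ⟨z.re, z.im, (Complex.re_add_im z).symm⟩
  set c := exp ((s : ℂ) • b)
  set d := exp (((-s : ℝ) : ℂ) • b)
  set u := exp ((t * Complex.I) • b)
  set v := exp (((-t : ℝ) * Complex.I) • b)
  have hc : c ∈ S := exp_mem hS (S.smul_mem hb _)
  have hu : u ∈ unitary A := exp_mul_I_smul_mem_unitary hsa t
  have hv : v ∈ unitary A := exp_mul_I_smul_mem_unitary hsa (-t)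
  have hcu : exp ((s + t * Complex.I) • b) = c * u := exp_add_smul ..
  have huc : exp ((s + t * Complex.I) • b) = u * c := by rw [add_comm, exp_add_smul]
  have hdv : exp (-(s + t * Complex.I) • b) = d * v := by
    rw [← exp_add_smul]; congr 2; push_cast; ring
  have hvd : exp (-(s + t * Complex.I) • b) = v * d := by
    rw [← exp_add_smul]; congr 2; push_cast; ring
  calc ‖exp (-(s + t * Complex.I) • b) * E (exp ((s + t * Complex.I) • b) * x *
          exp ((s + t * Complex.I) • b)) * exp (-(s + t * Complex.I) • b)‖
      = ‖v * (d * E (c * (u * x * u) * c) * d) * v‖ := by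
        congr 1
        nth_rewrite 2 [hdv]
        nth_rewrite 2 [huc]
        simp only [hcu, hvd, mul_assoc]
    _ = ‖d * E (c * (u * x * u) * c) * d‖ := by
        rw [CStarRing.norm_mul_mem_unitary _ hv, CStarRing.norm_mem_unitary_mul _ hv]
    _ ≤ 4 * ‖u * x * u‖ :=
        norm_mul_apply_mul_mul_le E (isSelfAdjoint_exp_ofReal_smul hsa s)
          (isSelfAdjoint_exp_ofReal_smul hsa (-s))
          (by simpa [c, d] using exp_smul_mul_exp_neg_smul b (s : ℂ))
          (by simpa [c, d] using exp_neg_smul_mul_exp_smul b (s : ℂ))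
          (hE _ (S.mul_mem hc hc)) _
    _ = 4 * ‖x‖ := by
        rw [CStarRing.norm_mul_mem_unitary _ hu, CStarRing.norm_mem_unitary_mul _ hu]

/-- Conjugating by `exp (z b)` and then back gives an entire function of `z`; it is bounded, since
`exp (i t b)` is unitary and conjugation by `exp (s b)` again yields a unital positive map. -/
lemma map_exp_mul_mul_exp (hE : ∀ a ∈ S, E a = a) {b : A} (hb : b ∈ S) (hsa : IsSelfAdjoint b)
    (x : A) (z : ℂ) :
    E (exp (z • b) * x * exp (z • b)) = exp (z • b) * E x * exp (z • b) := by
  let F (w : ℂ) : A := exp (-w • b) * E (exp (w • b) * x * exp (w • b)) * exp (-w • b)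
  have hF : Differentiable ℂ F := by
    have hE_diff : Differentiable ℂ E :=
      (⟨E.toLinearMap, map_continuous E⟩ : A →L[ℂ] A).differentiable
    have hexp : Differentiable ℂ fun w : ℂ => exp (w • b) := by fun_prop
    have hexp_neg : Differentiable ℂ fun w : ℂ => exp (-w • b) :=
      hexp.comp differentiable_neg
    exact (hexp_neg.mul (hE_diff.comp ((hexp.mul_const x).mul hexp))).mul hexp_neg
  have hbdd : Bornology.IsBounded (Set.range F) := by
    refine (Metric.isBounded_closedBall (x := 0) (r := 4 * ‖x‖)).subset ?_
    rintro _ ⟨w, rfl⟩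
    exact mem_closedBall_zero_iff.mpr (norm_exp_neg_mul_apply_mul_exp_neg_le hE hb hsa x w)
  have hF_const : F z = E x := by simpa [F] using hF.apply_eq_apply_of_bounded hbdd z 0
  calc E (exp (z • b) * x * exp (z • b))
      = (exp (z • b) * exp (-z • b)) * E (exp (z • b) * x * exp (z • b))
          * (exp (-z • b) * exp (z • b)) := by
        rw [exp_smul_mul_exp_neg_smul, exp_neg_smul_mul_exp_smul, one_mul, mul_one]
    _ = exp (z • b) * F z * exp (z • b) := by simp only [F, mul_assoc]
    _ = exp (z • b) * E x * exp (z • b) := by rw [hF_const]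

lemma map_mul_add_mul_of_isSelfAdjoint (hE : ∀ a ∈ S, E a = a) {b : A} (hb : b ∈ S)
    (hsa : IsSelfAdjoint b) (x : A) : E (b * x + x * b) = b * E x + E x * b := by
  have hderiv (y : A) :
      HasDerivAt (fun z : ℂ => exp (z • b) * y * exp (z • b)) (b * y + y * b) 0 := by
    have hexp : HasDerivAt (fun z : ℂ => exp (z • b)) b 0 := by
      simpa using hasDerivAt_exp_smul_const b (0 : ℂ)
    simpa using! (hexp.mul_const y).mul hexp
  have hEderiv := (⟨E.toLinearMap, map_continuous E⟩ : A →L[ℂ] A).hasFDerivAt.comp_hasDerivAt 0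
    (hderiv x)
  refine hEderiv.unique ?_
  exact (hderiv (E x)).congr_of_eventuallyEq
    (.of_forall fun z => map_exp_mul_mul_exp hE hb hsa x z)

lemma map_mul_add_mul (hE : ∀ a ∈ S, E a = a) {a : A} (ha : a ∈ S) (x : A) :
    E (a * x + x * a) = a * E x + E x * a := by
  have hre : (realPart a : A) ∈ S := by
    rw [realPart_apply_coe]
    exact S.smul_mem (add_mem ha (star_mem ha)) _
  have him : (imaginaryPart a : A) ∈ S := by
    rw [imaginaryPart_apply_coe]
    exact S.smul_mem (S.smul_mem (sub_mem ha (star_mem ha)) _) _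
  have h₁ := map_mul_add_mul_of_isSelfAdjoint hE hre (realPart a).2 x
  have h₂ := map_mul_add_mul_of_isSelfAdjoint hE him (imaginaryPart a).2 x
  set b := (realPart a : A)
  set c := (imaginaryPart a : A)
  have hab : a = b + Complex.I • c := (realPart_add_I_smul_imaginaryPart a).symm
  calc E (a * x + x * a) = E (b * x + x * b) + Complex.I • E (c * x + x * c) := by
        rw [← map_smul, ← map_add, hab]
        congr 1
        simp only [add_mul, mul_add, smul_mul_assoc, mul_smul_comm, smul_add]
        abel
    _ = a * E x + E x * a := by
        rw [h₁, h₂, hab]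
        simp only [add_mul, mul_add, smul_mul_assoc, mul_smul_comm, smul_add]
        abel

/-- The triple product is determined by the Jordan product: `2 a x a = a ∘ (a ∘ x) - a² ∘ x`
for `a ∘ x = a x + x a`. -/
lemma map_mul_mul_self (hE : ∀ a ∈ S, E a = a) {a : A} (ha : a ∈ S) (x : A) :
    E (a * x * a) = a * E x * a := by
  have triple (y : A) : (2 : ℂ) • (a * y * a) =
      (a * (a * y + y * a) + (a * y + y * a) * a) - (a * a * y + y * (a * a)) := by
    rw [two_smul]; noncomm_ring
  refine smul_right_injective A (two_ne_zero (α := ℂ)) ?_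
  simp only
  rw [← map_smul, triple, map_sub, map_mul_add_mul hE ha, map_mul_add_mul hE ha,
    map_mul_add_mul hE (S.mul_mem ha ha), triple]

end PositiveMaps

section Hypertrace

lemma eq_of_bounded_of_second_difference_eq_zero {F : Type*} [NormedAddCommGroup F]
    [NormedSpace ℝ F] {g : ℕ → F} {C : ℝ} (hC : ∀ n, ‖g n‖ ≤ C)
    (hg : ∀ n, g (n + 2) + g n = (2 : ℝ) • g (n + 1)) : g 1 = g 0 := by
  have affine (n : ℕ) : g n = g 0 + (n : ℝ) • (g 1 - g 0) ∧
      g (n + 1) = g 0 + ((n + 1 : ℕ) : ℝ) • (g 1 - g 0) := by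
    induction n with
    | zero => simp
    | succ n ih =>
      refine ⟨ih.2, ?_⟩
      rw [eq_sub_of_add_eq (hg n), ih.1, ih.2]
      push_cast
      module
  by_contra hne
  have hpos : 0 < ‖g 1 - g 0‖ := norm_pos_iff.mpr (sub_ne_zero.mpr hne)
  obtain ⟨n, hn⟩ := exists_nat_gt (2 * C / ‖g 1 - g 0‖)
  have h_le : n * ‖g 1 - g 0‖ ≤ 2 * C := calc
    n * ‖g 1 - g 0‖ = ‖g n - g 0‖ := by
      rw [(affine n).1, add_sub_cancel_left, norm_smul, Real.norm_natCast]
    _ ≤ 2 * C := by linarith [norm_sub_le (g n) (g 0), hC n, hC 0]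
  exact h_le.not_gt ((div_lt_iff₀ hpos).mp hn)

variable {A : Type*} [CStarAlgebra A] [PartialOrder A]

/-- `m` is a hypertrace for the subalgebra `S` of `A`: a positive functional on `A` which commutes
with every element of `S`. -/
def IsHypertrace (S : StarSubalgebra ℂ A) (m : A →ₚ[ℂ] ℂ) : Prop :=
  ∀ a ∈ S, ∀ x, m (a * x) = m (x * a)

variable {S : StarSubalgebra ℂ A} {m : A →ₚ[ℂ] ℂ}

lemma apply_conj_add_apply_conj_star
    (hm : ∀ a ∈ S, ∀ x, 2 * m (a * x * a) = m (a * a * x + x * (a * a))) {u : A}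
    (hu : u ∈ unitary A) (huS : u ∈ S) (y : A) :
    m (u * y * star u) + m (star u * y * u) = 2 * m y := by
  obtain ⟨h_star_mul, h_mul_star⟩ := hu
  have hl : u * u * (star u * y * star u) = u * y * star u := by grind
  have hr : star u * y * star u * (u * u) = star u * y * u := by grind
  have hmid : u * (star u * y * star u) * u = y := by grind
  rw [← map_add, ← hl, ← hr, ← hm u huS, hmid]

variable [StarOrderedRing A]

/-- The bounded sequence `n ↦ m (uⁿ x u⁻ⁿ)` has vanishing second differences. -/
lemma apply_mul_mul_star_of_unitary
    (hm : ∀ a ∈ S, ∀ x, 2 * m (a * x * a) = m (a * a * x + x * (a * a))) {u : A}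
    (hu : u ∈ unitary A) (huS : u ∈ S) (x : A) : m (u * x * star u) = m x := by
  let g (n : ℕ) : ℂ := m (u ^ n * x * star (u ^ n))
  have hg_bdd (n : ℕ) : ‖g n‖ ≤ 4 * ‖m 1‖ * ‖x‖ := by
    have hun : u ^ n ∈ unitary A := pow_mem hu n
    simpa only [CStarRing.norm_mul_mem_unitary _ (Unitary.star_mem hun),
      CStarRing.norm_mem_unitary_mul _ hun] using
      norm_apply_le_four_mul m (u ^ n * x * star (u ^ n))
  have hg_step (n : ℕ) : g (n + 2) + g n = (2 : ℝ) • g (n + 1) := by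
    have hup : u ^ (n + 2) * x * star (u ^ (n + 2)) =
        u * (u ^ (n + 1) * x * star (u ^ (n + 1))) * star u := by
      simp only [pow_succ' u (n + 1), star_mul, mul_assoc]
    have hdown : u ^ n * x * star (u ^ n) =
        star u * (u ^ (n + 1) * x * star (u ^ (n + 1))) * u := by
      have h_star_mul (z : A) : star u * (u * z) = z := by rw [← mul_assoc, hu.1, one_mul]
      simp only [pow_succ' u n, star_mul, mul_assoc, h_star_mul, hu.1, mul_one]
    simp only [g, hup, hdown, apply_conj_add_apply_conj_star hm hu huS]
    simp
  simpa [g] using eq_of_bounded_of_second_difference_eq_zero hg_bdd hg_step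

lemma isHypertrace_of_two_mul_apply_mul_mul_self [hS : IsClosed (S : Set A)]
    (hm : ∀ a ∈ S, ∀ x, 2 * m (a * x * a) = m (a * a * x + x * (a * a))) : IsHypertrace S m := by
  intro a ha x
  have ha_span : (⟨a, ha⟩ : S) ∈ Submodule.span ℂ (unitary S : Set S) := by
    rw [CStarAlgebra.span_unitary]; trivial
  suffices h : ∀ b ∈ Submodule.span ℂ (unitary S : Set S), m (b * x) = m (x * b) from h _ ha_span
  intro b hb
  induction hb using Submodule.span_induction with
  | mem u hu =>
    have hu_star : star (u : A) * u = 1 := congrArg Subtype.val hu.1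
    have hu_mul : (u : A) * star (u : A) = 1 := congrArg Subtype.val hu.2
    have h := apply_mul_mul_star_of_unitary hm ⟨hu_star, hu_mul⟩ u.2 (x * u)
    rwa [mul_assoc, mul_assoc, hu_mul, mul_one] at h
  | zero => simp
  | add b c _ _ hb hc => simp only [S.coe_add, add_mul, mul_add, map_add, hb, hc]
  | smul z b _ hb => simp only [S.coe_smul, smul_mul_assoc, mul_smul_comm, map_smul, hb]

lemma IsHypertrace.apply_mul_nonneg [hS : IsClosed (S : Set A)] (hm : IsHypertrace S m) {y q : A}
    (hy : 0 ≤ y) (hq : 0 ≤ q) (hqS : q ∈ S) : 0 ≤ m (y * q) := by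
  let r := CFC.sqrt q
  have hrS : r ∈ S := by
    simpa only [r, CFC.sqrt_eq_real_sqrt q] using cfcₙ_mem (𝕜' := ℂ) Real.sqrt hqS
  have hr : 0 ≤ r := CFC.sqrt_nonneg q
  have hrr : r * r = q := CFC.sqrt_mul_sqrt_self q
  calc 0 ≤ m (r * y * r) := m.map_nonneg (conjugate_nonneg_of_nonneg hy hr)
    _ = m (y * q) := by rw [mul_assoc, hm r hrS, mul_assoc, hrr]

lemma IsHypertrace.apply_mul_le [hS : IsClosed (S : Set A)] (hm : IsHypertrace S m) {y q : A}
    (hy : 0 ≤ y) (hq : 0 ≤ q) (hqS : q ∈ S) : m (y * q) ≤ ‖y‖ * m q := by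
  have h := hm.apply_mul_nonneg
    (sub_nonneg.mpr (IsSelfAdjoint.of_nonneg hy).le_algebraMap_norm_self) hq hqS
  rwa [sub_mul, map_sub, sub_nonneg, Algebra.algebraMap_eq_smul_one, smul_one_mul,
    ← Complex.coe_smul, map_smul] at h

/-- Connes' hypertrace: a trace on `S` composed with a conditional expectation onto `S`. -/
lemma isHypertrace_of_tracial [hS : IsClosed (S : Set A)] {E : A →ₚ[ℂ] A}
    (hE : ∀ a ∈ S, E a = a) (hES : ∀ x, E x ∈ S) {τ : A →ₗ[ℂ] ℂ}
    (hτ : ∀ a ∈ S, ∀ b ∈ S, τ (a * b) = τ (b * a)) (hm : ∀ x, m x = τ (E x)) :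
    IsHypertrace S m := by
  refine isHypertrace_of_two_mul_apply_mul_mul_self fun a ha x => ?_
  have hcyc : τ (a * E x * a) = τ (a * a * E x) := by
    rw [hτ _ (mul_mem ha (hES x)) _ ha, mul_assoc]
  rw [hm, hm, map_mul_mul_self hE ha, map_mul_add_mul hE (mul_mem ha ha), map_add,
    hτ _ (hES x) _ (mul_mem ha ha), hcyc, two_mul]

end Hypertrace

section NormalFunctionals

open Filter Topology InnerProductSpace

variable {K : Type*} [NormedAddCommGroup K]

lemma summable_norm_mul_norm {ι : Type*} {ξ η : ι → K} (hξ : Summable fun i => ‖ξ i‖ ^ 2)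
    (hη : Summable fun i => ‖η i‖ ^ 2) : Summable fun i => ‖η i‖ * ‖ξ i‖ := by
  refine .of_nonneg_of_le (fun i => by positivity) (fun i => ?_) (hξ.add hη)
  nlinarith [sq_nonneg (‖ξ i‖ - ‖η i‖), sq_nonneg ‖ξ i‖, sq_nonneg ‖η i‖]

variable [InnerProductSpace ℂ K]

lemma norm_inner_apply_le (X : B K) (η ξ : K) : ‖⟪η, X ξ⟫‖ ≤ ‖X‖ * (‖η‖ * ‖ξ‖) :=
  calc ‖⟪η, X ξ⟫‖ ≤ ‖η‖ * (‖X‖ * ‖ξ‖) := by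
        grw [norm_inner_le_norm, X.le_opNorm]
    _ = ‖X‖ * (‖η‖ * ‖ξ‖) := by ring

lemma summable_inner_apply {ξ η : ℕ → K} (hξ : Summable fun n => ‖ξ n‖ ^ 2)
    (hη : Summable fun n => ‖η n‖ ^ 2) (X : B K) : Summable fun n => ⟪η n, X (ξ n)⟫ :=
  .of_norm_bounded ((summable_norm_mul_norm hξ hη).mul_left ‖X‖) fun _ => norm_inner_apply_le ..

/-- The normal functional `∑ₙ ω_{ξₙ,ηₙ}` of two square-summable sequences of vectors. -/
def seriesFunctional {ξ η : ℕ → K} (hξ : Summable fun n => ‖ξ n‖ ^ 2)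
    (hη : Summable fun n => ‖η n‖ ^ 2) : B K →ₗ[ℂ] ℂ where
  toFun X := ∑' n, ⟪η n, X (ξ n)⟫
  map_add' X Y := by
    rw [← (summable_inner_apply hξ hη X).tsum_add (summable_inner_apply hξ hη Y)]
    simp only [_root_.add_apply, inner_add_right]
  map_smul' c X := by
    simp only [_root_.smul_apply, inner_smul_right, tsum_mul_left, RingHom.id_apply, smul_eq_mul]

lemma hasSum_seriesFunctional {ξ η : ℕ → K} (hξ : Summable fun n => ‖ξ n‖ ^ 2)
    (hη : Summable fun n => ‖η n‖ ^ 2) (X : B K) :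
    HasSum (fun n => ⟪η n, X (ξ n)⟫) (seriesFunctional hξ hη X) :=
  (summable_inner_apply hξ hη X).hasSum

lemma isNormalFunctional_seriesFunctional {ξ η : ℕ → K}
    (hξ : Summable fun n => ‖ξ n‖ ^ 2) (hη : Summable fun n => ‖η n‖ ^ 2) :
    IsNormalFunctional K (seriesFunctional hξ hη) :=
  ⟨ξ, η, hξ, hη, hasSum_seriesFunctional hξ hη⟩

lemma isNormalFunctional_vecFunctional (ξ η : K) :
    IsNormalFunctional K (vecFunctional K ξ η) := by
  have summable_single (ζ : K) : Summable fun n => ‖Pi.single (M := fun _ : ℕ => K) 0 ζ n‖ ^ 2 :=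
    summable_of_ne_finset_zero (s := {0}) fun n hn => by simp_all
  refine ⟨Pi.single 0 ξ, Pi.single 0 η, summable_single ξ, summable_single η, fun x => ?_⟩
  convert hasSum_single 0 fun n hn => ?_
  · simp [vecFunctional]
  · simp [hn]

variable {f g : B K →ₗ[ℂ] ℂ}

lemma IsNormalFunctional.tendsto (hf : IsNormalFunctional K f) {α : Type*} {l : Filter α}
    {X : α → B K} {Y : B K} {C : ℝ} (hC : ∀ᶠ a in l, ‖X a‖ ≤ C)
    (hX : ∀ v, Tendsto (fun a => X a v) l (𝓝 (Y v))) : Tendsto (fun a => f (X a)) l (𝓝 (f Y)) := by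
  obtain ⟨ξ, η, hξ, hη, hsum⟩ := hf
  simp only [← (hsum _).tsum_eq]
  refine tendsto_tsum_of_dominated_convergence ((summable_norm_mul_norm hξ hη).mul_left C)
    (fun n => tendsto_const_nhds.inner (hX (ξ n))) ?_
  filter_upwards [hC] with a ha n
  grw [norm_inner_apply_le, ha]

lemma IsNormalFunctional.continuous (hf : IsNormalFunctional K f) : Continuous f := by
  refine continuous_iff_continuousAt.mpr fun X => hf.tendsto (C := ‖X‖ + 1) ?_ fun v => ?_
  · filter_upwards [Metric.ball_mem_nhds X one_pos] with Y hY
    linarith [norm_le_norm_add_norm_sub' Y X, mem_ball_iff_norm.mp hY]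
  · exact (ContinuousLinearMap.apply ℂ K v).continuous.continuousAt

lemma IsNormalFunctional.ext_rankOne (hf : IsNormalFunctional K f) (hg : IsNormalFunctional K g)
    (h : ∀ u v, f (rankOne ℂ u v) = g (rankOne ℂ u v)) : f = g := by
  ext X
  let P (F : Finset K) : B K := (Submodule.span ℂ (F : Set K)).starProjection
  have hP_norm (F : Finset K) : ‖X * P F‖ ≤ ‖X‖ := by
    grw [norm_mul_le, Submodule.starProjection_norm_le, mul_one]
  have hP_tendsto (v : K) : Tendsto (fun F => (X * P F) v) atTop (𝓝 (X v)) := by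
    refine tendsto_const_nhds.congr' ?_
    filter_upwards [eventually_ge_atTop {v}] with F hF
    have hv : v ∈ Submodule.span ℂ (F : Set K) := Submodule.subset_span (hF (by simp))
    exact congrArg X (Submodule.starProjection_eq_self_iff.mpr hv).symm
  have hfg (F : Finset K) : f (X * P F) = g (X * P F) := by
    simp only [P, (stdOrthonormalBasis ℂ _).starProjection_eq_sum_rankOne, Finset.mul_sum, map_sum,
      ContinuousLinearMap.mul_def, comp_rankOne, h]
  refine tendsto_nhds_unique (hf.tendsto (.of_forall hP_norm) hP_tendsto) ?_
  simpa only [hfg] using hg.tendsto (.of_forall hP_norm) hP_tendsto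

lemma IsNormalFunctional.ext_rankOne_of_dense (hf : IsNormalFunctional K f)
    (hg : IsNormalFunctional K g) {S : Set K} (hS : Dense (Submodule.span ℂ S : Set K))
    (h : ∀ u ∈ S, ∀ v ∈ S, f (rankOne ℂ u v) = g (rankOne ℂ u v)) : f = g := by
  let fc : B K →L[ℂ] ℂ := ⟨f, hf.continuous⟩
  let gc : B K →L[ℂ] ℂ := ⟨g, hg.continuous⟩
  have hleft (v : K) (hv : v ∈ S) : fc ∘L (rankOne ℂ).flip v = gc ∘L (rankOne ℂ).flip v :=
    ContinuousLinearMap.ext_on hS fun u hu => h u hu v hv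
  have hright (u : K) : fc.comp (rankOne ℂ u) = gc.comp (rankOne ℂ u) :=
    ContinuousLinearMap.ext_on hS fun v hv => DFunLike.congr_fun (hleft v hv) u
  exact hf.ext_rankOne hg fun u v => DFunLike.congr_fun (hright u) v

end NormalFunctionals

section Adjoint

variable {K : Type*} [NormedAddCommGroup K] [InnerProductSpace ℂ K] [CompleteSpace K]

lemma inner_star_apply (T : B K) (u v : K) : ⟪star T u, v⟫ = ⟪u, T v⟫ :=
  T.adjoint_inner_left v u

lemma inner_apply_star (T : B K) (u v : K) : ⟪u, star T v⟫ = ⟪T u, v⟫ :=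
  T.adjoint_inner_right u v

end Adjoint

section TensorSquare

open ContinuousLinearMap InnerProductSpace

variable {H H2 : Type*}
  [NormedAddCommGroup H] [InnerProductSpace ℂ H] [CompleteSpace H]
  [NormedAddCommGroup H2] [InnerProductSpace ℂ H2] [CompleteSpace H2]

namespace LCQG

variable (Q : LCQG H H2)

lemma norm_tmul (a b : H) : ‖Q.tmul a b‖ = ‖a‖ * ‖b‖ := by
  have h : ((‖Q.tmul a b‖ ^ 2 : ℝ) : ℂ) = ((‖a‖ * ‖b‖) ^ 2 : ℝ) := by
    push_cast
    simpa only [inner_self_eq_norm_sq_to_K, ← mul_pow] using! Q.tmul_inner a b a b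
  exact (sq_eq_sq₀ (norm_nonneg _) (by positivity)).mp (Complex.ofReal_injective h)

lemma dense_span_tmul :
    Dense (Submodule.span ℂ {v : H2 | ∃ a b, v = Q.tmul a b} : Set H2) :=
  (Submodule.dense_iff_topologicalClosure_eq_top ..).mpr Q.tmul_total

lemma ext_tmul {F : Type*} [NormedAddCommGroup F] [NormedSpace ℂ F] {S T : H2 →L[ℂ] F}
    (h : ∀ a b, S (Q.tmul a b) = T (Q.tmul a b)) : S = T :=
  ContinuousLinearMap.ext_on Q.dense_span_tmul (by rintro _ ⟨a, b, rfl⟩; exact h a b)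

lemma ext_inner_tmul {u v : H2} (h : ∀ a b, ⟪Q.tmul a b, u⟫ = ⟪Q.tmul a b, v⟫) : u = v := by
  have huv : innerSL ℂ u = innerSL ℂ v := Q.ext_tmul fun a b => by
    simp only [innerSL_apply_apply]
    rw [← inner_conj_symm, h, inner_conj_symm]
  exact ext_inner_right ℂ fun w => DFunLike.congr_fun huv w

lemma ext_inner_apply_tmul {S T : B H2}
    (h : ∀ a b c d, ⟪Q.tmul a b, S (Q.tmul c d)⟫ = ⟪Q.tmul a b, T (Q.tmul c d)⟫) : S = T :=
  Q.ext_tmul fun c d => Q.ext_inner_tmul fun a b => h a b c d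

lemma tensorOp_mul (x y x' y' : B H) :
    Q.tensorOp x y * Q.tensorOp x' y' = Q.tensorOp (x * x') (y * y') :=
  Q.ext_tmul fun a b => by simp only [mul_apply_eq_comp, Q.tensorOp_apply]

lemma commute_tensorOp {x y x' y' : B H} (hx : Commute x x') (hy : Commute y y') :
    Commute (Q.tensorOp x y) (Q.tensorOp x' y') := by
  rw [commute_iff_eq, tensorOp_mul, tensorOp_mul, hx.eq, hy.eq]

lemma tensorOp_one : Q.tensorOp 1 1 = 1 :=
  Q.ext_tmul fun a b => by simp only [Q.tensorOp_apply, one_apply_eq_self]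

lemma star_tensorOp (x y : B H) : star (Q.tensorOp x y) = Q.tensorOp (star x) (star y) :=
  Q.ext_inner_apply_tmul fun a b c d => by
    simp only [inner_apply_star, Q.tensorOp_apply, Q.tmul_inner]

lemma star_flipU : star Q.flipU = Q.flipU :=
  Q.ext_inner_apply_tmul fun a b c d => by
    simp only [inner_apply_star, Q.flipU_apply, Q.tmul_inner, mul_comm]

lemma flipU_conj (y : B H) : Q.flipU * Q.tensorOp 1 y * Q.flipU = Q.tensorOp y 1 :=
  Q.ext_tmul fun a b => by simp only [mul_apply_eq_comp, Q.flipU_apply, Q.tensorOp_apply]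

lemma rankOne_tmul (a b c d : H) : rankOne ℂ (Q.tmul a b) (Q.tmul c d) =
    Q.tensorOp (rankOne ℂ a c) (rankOne ℂ b d) :=
  Q.ext_tmul fun x y => by
    simp only [Q.tensorOp_apply, rankOne_apply, Q.tmul_inner, map_smul, LinearMap.smul_apply,
      smul_smul, mul_comm]

/-- The creation operator `b ↦ ξ ⊗ b` on the left leg of `H2`. -/
def createLeft (ξ : H) : H →L[ℂ] H2 :=
  (Q.tmul ξ).mkContinuous ‖ξ‖ fun b => (Q.norm_tmul ξ b).le

/-- The creation operator `a ↦ a ⊗ ξ` on the right leg of `H2`. -/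
def createRight (ξ : H) : H →L[ℂ] H2 :=
  (Q.tmul.flip ξ).mkContinuous ‖ξ‖ fun a => by
    rw [LinearMap.flip_apply, Q.norm_tmul, mul_comm]

lemma createLeft_apply (ξ b : H) : Q.createLeft ξ b = Q.tmul ξ b := rfl

lemma createRight_apply (ξ a : H) : Q.createRight ξ a = Q.tmul a ξ := rfl

lemma norm_createLeft_le (ξ : H) : ‖Q.createLeft ξ‖ ≤ ‖ξ‖ :=
  LinearMap.mkContinuous_norm_le _ (norm_nonneg ξ) _

/-- The slice `(ω_{ξ,η} ⊗ id)(X)` of an operator on `H2`. -/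
def leftSlice (ξ η : H) : B H2 →ₗ[ℂ] B H where
  toFun X := adjoint (Q.createLeft η) ∘L X ∘L Q.createLeft ξ
  map_add' X Y := by simp only [add_comp, comp_add]
  map_smul' c X := by simp only [smul_comp, comp_smul, RingHom.id_apply]

/-- The slice `(id ⊗ ω_{ξ,η})(X)` of an operator on `H2`. -/
def rightSlice (ξ η : H) : B H2 →ₗ[ℂ] B H where
  toFun X := adjoint (Q.createRight η) ∘L X ∘L Q.createRight ξ
  map_add' X Y := by simp only [add_comp, comp_add]
  map_smul' c X := by simp only [smul_comp, comp_smul, RingHom.id_apply]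

lemma leftSlice_apply (ξ η : H) (X : B H2) (ν : H) :
    Q.leftSlice ξ η X ν = adjoint (Q.createLeft η) (X (Q.tmul ξ ν)) := rfl

lemma inner_leftSlice (ξ η : H) (X : B H2) (μ ν : H) :
    ⟪μ, Q.leftSlice ξ η X ν⟫ = ⟪Q.tmul η μ, X (Q.tmul ξ ν)⟫ :=
  adjoint_inner_right (Q.createLeft η) μ (X (Q.tmul ξ ν))

lemma inner_rightSlice (ξ η : H) (X : B H2) (μ ν : H) :
    ⟪μ, Q.rightSlice ξ η X ν⟫ = ⟪Q.tmul μ η, X (Q.tmul ν ξ)⟫ :=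
  adjoint_inner_right (Q.createRight η) μ (X (Q.tmul ν ξ))

lemma norm_leftSlice_le (ξ η : H) (X : B H2) : ‖Q.leftSlice ξ η X‖ ≤ ‖X‖ * (‖η‖ * ‖ξ‖) :=
  calc ‖Q.leftSlice ξ η X‖ ≤ ‖adjoint (Q.createLeft η)‖ * (‖X‖ * ‖Q.createLeft ξ‖) := by
        grw [← opNorm_comp_le X, ← opNorm_comp_le]; rfl
    _ ≤ ‖η‖ * (‖X‖ * ‖ξ‖) := by
        rw [LinearIsometryEquiv.norm_map]
        grw [norm_createLeft_le, norm_createLeft_le]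
    _ = ‖X‖ * (‖η‖ * ‖ξ‖) := by ring

lemma ext_leftSlice {X Y : B H2} (h : ∀ ξ η, Q.leftSlice ξ η X = Q.leftSlice ξ η Y) : X = Y :=
  Q.ext_inner_apply_tmul fun a b c d => by rw [← inner_leftSlice, ← inner_leftSlice, h]

lemma ext_rightSlice {X Y : B H2} (h : ∀ ξ η, Q.rightSlice ξ η X = Q.rightSlice ξ η Y) : X = Y :=
  Q.ext_inner_apply_tmul fun a b c d => by rw [← inner_rightSlice, ← inner_rightSlice, h]

lemma star_leftSlice (ξ η : H) (X : B H2) :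
    star (Q.leftSlice ξ η X) = Q.leftSlice η ξ (star X) := by
  refine ContinuousLinearMap.ext fun ν => ext_inner_left ℂ fun μ => ?_
  rw [inner_apply_star, ← inner_conj_symm, inner_leftSlice, inner_conj_symm, inner_leftSlice,
    inner_apply_star]

lemma leftSlice_one_tensorOp_mul (ξ η : H) (X : B H2) (y : B H) :
    Q.leftSlice ξ η (Q.tensorOp 1 y * X) = y * Q.leftSlice ξ η X := by
  refine ContinuousLinearMap.ext fun ν => ext_inner_left ℂ fun μ => ?_
  rw [inner_leftSlice, mul_apply_eq_comp, mul_apply_eq_comp, ← inner_star_apply,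
    ← inner_star_apply y, star_tensorOp, star_one, Q.tensorOp_apply, one_apply_eq_self,
    inner_leftSlice]

lemma leftSlice_mul_one_tensorOp (ξ η : H) (X : B H2) (y : B H) :
    Q.leftSlice ξ η (X * Q.tensorOp 1 y) = Q.leftSlice ξ η X * y :=
  ContinuousLinearMap.ext fun ν => by
    rw [mul_apply_eq_comp, leftSlice_apply, leftSlice_apply, mul_apply_eq_comp, Q.tensorOp_apply,
      one_apply_eq_self]

lemma commute_one_tensorOp_iff {X : B H2} {y : B H} :
    Commute X (Q.tensorOp 1 y) ↔ ∀ ξ η, Commute (Q.leftSlice ξ η X) y := by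
  simp only [commute_iff_eq, ← leftSlice_one_tensorOp_mul, ← leftSlice_mul_one_tensorOp]
  exact ⟨fun h ξ η => congrArg _ h, Q.ext_leftSlice⟩

lemma rightSlice_tensorOp_one_mul (ξ η : H) (X : B H2) (y : B H) :
    Q.rightSlice ξ η (Q.tensorOp y 1 * X) = y * Q.rightSlice ξ η X := by
  refine ContinuousLinearMap.ext fun ν => ext_inner_left ℂ fun μ => ?_
  rw [inner_rightSlice, mul_apply_eq_comp, mul_apply_eq_comp, ← inner_star_apply,
    ← inner_star_apply y, star_tensorOp, star_one, Q.tensorOp_apply, one_apply_eq_self,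
    inner_rightSlice]

lemma rightSlice_mul_tensorOp_one (ξ η : H) (X : B H2) (y : B H) :
    Q.rightSlice ξ η (X * Q.tensorOp y 1) = Q.rightSlice ξ η X * y :=
  ContinuousLinearMap.ext fun ν => ext_inner_left ℂ fun μ => by
    rw [mul_apply_eq_comp, inner_rightSlice, inner_rightSlice, mul_apply_eq_comp, Q.tensorOp_apply,
      one_apply_eq_self]

lemma commute_tensorOp_one_iff {X : B H2} {y : B H} :
    Commute X (Q.tensorOp y 1) ↔ ∀ ξ η, Commute (Q.rightSlice ξ η X) y := by
  simp only [commute_iff_eq, ← rightSlice_tensorOp_one_mul, ← rightSlice_mul_tensorOp_one]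
  exact ⟨fun h ξ η => congrArg _ h, Q.ext_rightSlice⟩

lemma leftSlice_flipU_conj (ξ η : H) (X : B H2) :
    Q.leftSlice ξ η (Q.flipU * X * Q.flipU) = Q.rightSlice ξ η X := by
  refine ContinuousLinearMap.ext fun ν => ext_inner_left ℂ fun μ => ?_
  rw [inner_leftSlice, inner_rightSlice, mul_apply_eq_comp, mul_apply_eq_comp, Q.flipU_apply,
    ← inner_star_apply, star_flipU, Q.flipU_apply]

lemma rightSlice_flipU_conj (ξ η : H) (X : B H2) :
    Q.rightSlice ξ η (Q.flipU * X * Q.flipU) = Q.leftSlice ξ η X := by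
  refine ContinuousLinearMap.ext fun ν => ext_inner_left ℂ fun μ => ?_
  rw [inner_leftSlice, inner_rightSlice, mul_apply_eq_comp, mul_apply_eq_comp, Q.flipU_apply,
    ← inner_star_apply, star_flipU, Q.flipU_apply]

end LCQG

end TensorSquare

section NormalSlices

variable {H H2 : Type*}
  [NormedAddCommGroup H] [InnerProductSpace ℂ H] [CompleteSpace H]
  [NormedAddCommGroup H2] [InnerProductSpace ℂ H2] [CompleteSpace H2]

namespace LCQG

variable (Q : LCQG H H2) {ω ρ : B H →ₗ[ℂ] ℂ}

lemma funcTensor_unique (hω : IsNormalFunctional H ω) (hρ : IsNormalFunctional H ρ)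
    {f : B H2 →ₗ[ℂ] ℂ} (hf : IsNormalFunctional H2 f)
    (h : ∀ x y, f (Q.tensorOp x y) = ω x * ρ y) : Q.funcTensor ω ρ = f := by
  refine (Q.funcTensor_normal ω ρ hω hρ).ext_rankOne_of_dense hf Q.dense_span_tmul ?_
  rintro _ ⟨a, b, rfl⟩ _ ⟨c, d, rfl⟩
  rw [rankOne_tmul, Q.funcTensor_elem, h]

lemma funcTensor_vecFunctional (a b c d : H) :
    Q.funcTensor (vecFunctional H a b) (vecFunctional H c d) =
      vecFunctional H2 (Q.tmul a c) (Q.tmul b d) :=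
  Q.funcTensor_unique (isNormalFunctional_vecFunctional a b) (isNormalFunctional_vecFunctional c d)
    (isNormalFunctional_vecFunctional _ _) fun x y => by
      simp only [vecFunctional, LinearMap.coe_mk, AddHom.coe_mk, Q.tensorOp_apply, Q.tmul_inner]

lemma sliceL_vecFunctional (ξ η : H) (X : B H2) :
    Q.sliceL (vecFunctional H ξ η) X = Q.leftSlice ξ η X := by
  refine ContinuousLinearMap.ext fun ν => ext_inner_left ℂ fun μ => ?_
  rw [inner_leftSlice]
  simpa only [funcTensor_vecFunctional] using! Q.sliceL_char (vecFunctional H ξ η) X ν μ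

lemma sliceR_vecFunctional (ξ η : H) (X : B H2) :
    Q.sliceR (vecFunctional H ξ η) X = Q.rightSlice ξ η X := by
  refine ContinuousLinearMap.ext fun ν => ext_inner_left ℂ fun μ => ?_
  rw [inner_rightSlice]
  simpa only [funcTensor_vecFunctional] using! Q.sliceR_char (vecFunctional H ξ η) X ν μ

lemma hasSum_funcTensor_vecFunctional {ξ η : ℕ → H} (hξ : Summable fun n => ‖ξ n‖ ^ 2)
    (hη : Summable fun n => ‖η n‖ ^ 2) (hω : ∀ x : B H, HasSum (fun n => ⟪η n, x (ξ n)⟫) (ω x))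
    (X : B H2) (a b : H) :
    HasSum (fun n => ⟪Q.tmul (η n) b, X (Q.tmul (ξ n) a)⟫)
      (Q.funcTensor ω (vecFunctional H a b) X) := by
  have hξa : Summable fun n => ‖Q.tmul (ξ n) a‖ ^ 2 := by
    simpa only [norm_tmul, mul_pow] using hξ.mul_right _
  have hηb : Summable fun n => ‖Q.tmul (η n) b‖ ^ 2 := by
    simpa only [norm_tmul, mul_pow] using hη.mul_right _
  rw [Q.funcTensor_unique ⟨ξ, η, hξ, hη, hω⟩ (isNormalFunctional_vecFunctional a b)
    (isNormalFunctional_seriesFunctional hξa hηb)]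
  · exact hasSum_seriesFunctional hξa hηb X
  · intro x y
    refine (hasSum_seriesFunctional hξa hηb _).unique ?_
    simpa only [Q.tensorOp_apply, Q.tmul_inner] using! (hω x).mul_right ⟪b, y a⟫

lemma hasSum_sliceL {ξ η : ℕ → H} (hξ : Summable fun n => ‖ξ n‖ ^ 2)
    (hη : Summable fun n => ‖η n‖ ^ 2) (hω : ∀ x : B H, HasSum (fun n => ⟪η n, x (ξ n)⟫) (ω x))
    (X : B H2) : HasSum (fun n => Q.leftSlice (ξ n) (η n) X) (Q.sliceL ω X) := by
  have hs : Summable fun n => Q.leftSlice (ξ n) (η n) X :=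
    .of_norm_bounded ((summable_norm_mul_norm hξ hη).mul_left ‖X‖)
      fun n => Q.norm_leftSlice_le (ξ n) (η n) X
  convert hs.hasSum
  refine ContinuousLinearMap.ext fun ν => ext_inner_left ℂ fun μ => ?_
  have hsum : HasSum (fun n => ⟪μ, Q.leftSlice (ξ n) (η n) X ν⟫)
      ⟪μ, (∑' n, Q.leftSlice (ξ n) (η n) X) ν⟫ :=
    (hs.hasSum.mapL (ContinuousLinearMap.apply ℂ H ν)).mapL (innerSL ℂ μ)
  simp only [inner_leftSlice] at hsum
  exact ((Q.hasSum_funcTensor_vecFunctional hξ hη hω X ν μ).unique hsum ▸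
    Q.sliceL_char ω X ν μ :)

end LCQG

end NormalSlices

section QuantumGroup

open ContinuousLinearMap

variable {H H2 : Type*}
  [NormedAddCommGroup H] [InnerProductSpace ℂ H] [CompleteSpace H]
  [NormedAddCommGroup H2] [InnerProductSpace ℂ H2] [CompleteSpace H2]

lemma mem_of_forall_commute_commutant {N : VonNeumannAlgebra H} {x : B H}
    (h : ∀ y ∈ N.commutant, Commute x y) : x ∈ N := by
  rw [← N.commutant_commutant, VonNeumannAlgebra.mem_commutant_iff]
  exact fun y hy => (h y hy).symm

lemma commute_of_mem_of_mem_commutant {N : VonNeumannAlgebra H} {x y : B H} (hx : x ∈ N)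
    (hy : y ∈ N.commutant) : Commute x y :=
  VonNeumannAlgebra.mem_commutant_iff.mp hy x hx

namespace LCQG

variable (Q : LCQG H H2)

/-- The opposite `y ↦ W (y ⊗ 1) W*` of the comultiplication of the dual quantum group, which unlike
`Deltahat` involves no flip. -/
def dualDelta (y : B H) : B H2 := Q.W * Q.tensorOp y 1 * star Q.W

lemma Deltahat_eq_flipU_conj (y : B H) :
    Q.Deltahat y = Q.flipU * Q.dualDelta y * Q.flipU := by
  rw [Deltahat, What, dualDelta, ← Q.flipU_conj y]
  simp only [star_mul, star_star, star_flipU, mul_assoc]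

lemma dualDelta_mul (x y : B H) : Q.dualDelta (x * y) = Q.dualDelta x * Q.dualDelta y := by
  have hW (Z : B H2) : star Q.W * (Q.W * Z) = Z := by rw [← mul_assoc, Q.W_unitary_l, one_mul]
  have hxy : Q.tensorOp (x * y) 1 = Q.tensorOp x 1 * Q.tensorOp y 1 := by
    rw [tensorOp_mul, one_mul]
  simp only [dualDelta, hxy, mul_assoc, hW]

lemma star_dualDelta (y : B H) : star (Q.dualDelta y) = Q.dualDelta (star y) := by
  simp only [dualDelta, star_mul, star_star, star_tensorOp, star_one, mul_assoc]

lemma commute_W_tensorOp_one {y : B H} (hy : y ∈ Q.M.commutant) :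
    Commute Q.W (Q.tensorOp y 1) :=
  Q.W_mem y hy 1 (one_mem _)

lemma leftSlice_W_mem (ξ η : H) : Q.leftSlice ξ η Q.W ∈ Q.Mhat :=
  mem_of_forall_commute_commutant fun y hy =>
    Q.commute_one_tensorOp_iff.mp (Q.W_mem 1 (one_mem _) y hy) ξ η

lemma rightSlice_star_W_mem (ξ η : H) : Q.rightSlice ξ η (star Q.W) ∈ Q.M :=
  mem_of_forall_commute_commutant fun y hy => Q.commute_tensorOp_one_iff.mp
    (by simpa only [star_tensorOp, star_one, star_star] using
      (Q.commute_W_tensorOp_one (star_mem hy)).star_star) ξ η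

lemma leftSlice_Delta_mem (ξ η : H) {x : B H} (hx : x ∈ Q.M) :
    Q.leftSlice ξ η (Q.Delta x) ∈ Q.M :=
  Q.sliceL_vecFunctional ξ η _ ▸ Q.slice_Delta_mem (vecFunctional H ξ η) x hx

lemma sliceL_vecFunctional_Deltahat (ξ η : H) (y : B H) :
    Q.sliceL (vecFunctional H ξ η) (Q.Deltahat y) = Q.rightSlice ξ η (Q.dualDelta y) := by
  rw [sliceL_vecFunctional, Deltahat_eq_flipU_conj, leftSlice_flipU_conj]

lemma sliceR_vecFunctional_Deltahat (ξ η : H) (y : B H) :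
    Q.sliceR (vecFunctional H ξ η) (Q.Deltahat y) = Q.leftSlice ξ η (Q.dualDelta y) := by
  rw [sliceR_vecFunctional, Deltahat_eq_flipU_conj, rightSlice_flipU_conj]

end LCQG

namespace DiscreteKacQG

variable (Q : DiscreteKacQG H H2)

lemma rightSlice_dualDelta_mem (ξ η : H) {y : B H} (hy : y ∈ Q.Mhat) :
    Q.rightSlice ξ η (Q.dualDelta y) ∈ Q.Mhat :=
  Q.sliceL_vecFunctional_Deltahat ξ η y ▸ Q.slice_Deltahat_memL _ y hy

lemma leftSlice_dualDelta_mem (ξ η : H) {y : B H} (hy : y ∈ Q.Mhat) :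
    Q.leftSlice ξ η (Q.dualDelta y) ∈ Q.Mhat :=
  Q.sliceR_vecFunctional_Deltahat ξ η y ▸ Q.slice_Deltahat_memR _ y hy

lemma phihat_rightSlice_dualDelta (ξ η : H) {y : B H} (hy : y ∈ Q.Mhat) :
    Q.phihat (Q.rightSlice ξ η (Q.dualDelta y)) = ⟪η, ξ⟫ * Q.phihat y :=
  Q.sliceL_vecFunctional_Deltahat ξ η y ▸
    Q.phihat_left_inv y hy _ (isNormalFunctional_vecFunctional ξ η)

lemma phihat_leftSlice_dualDelta (ξ η : H) {y : B H} (hy : y ∈ Q.Mhat) :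
    Q.phihat (Q.leftSlice ξ η (Q.dualDelta y)) = ⟪η, ξ⟫ * Q.phihat y :=
  Q.sliceR_vecFunctional_Deltahat ξ η y ▸
    Q.phihat_right_inv y hy _ (isNormalFunctional_vecFunctional ξ η)

/-- The vector `Λ(1)` of the GNS representation, which implements the tracial Haar state. -/
def traceVector : H := Q.Lam 1

lemma phihat_eq_inner_traceVector {a : B H} (ha : a ∈ Q.Mhat) :
    Q.phihat a = ⟪Q.traceVector, a Q.traceVector⟫ := by
  rw [traceVector, Q.Lam_act a ha 1 (one_mem _), mul_one, Q.Lam_inner 1 (one_mem _) a ha, star_one,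
    one_mul]

lemma norm_traceVector : ‖Q.traceVector‖ = 1 := by
  have h := Q.phihat_eq_inner_traceVector (one_mem _)
  rw [Q.phihat_state.1, one_apply_eq_self, inner_self_eq_norm_sq_to_K] at h
  have hsq : ‖Q.traceVector‖ ^ 2 = 1 := Complex.ofReal_injective (by simpa using! h.symm)
  exact (pow_eq_one_iff_of_nonneg (norm_nonneg _) two_ne_zero).mp hsq

lemma inner_apply_apply_traceVector_comm {a b : B H} (ha : a ∈ Q.Mhat) (hb : b ∈ Q.Mhat) :
    ⟪Q.traceVector, a (b Q.traceVector)⟫ = ⟪Q.traceVector, b (a Q.traceVector)⟫ := by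
  rw [← mul_apply_eq_comp, ← mul_apply_eq_comp, ← Q.phihat_eq_inner_traceVector (mul_mem ha hb),
    ← Q.phihat_eq_inner_traceVector (mul_mem hb ha), Q.phihat_tracial a ha b hb]

lemma norm_star_apply_traceVector {a : B H} (ha : a ∈ Q.Mhat) :
    ‖star a Q.traceVector‖ = ‖a Q.traceVector‖ := by
  have h := Q.inner_apply_apply_traceVector_comm ha (star_mem ha)
  rw [inner_apply_star, ← inner_star_apply, inner_self_eq_norm_sq_to_K,
    inner_self_eq_norm_sq_to_K] at h
  exact (sq_eq_sq₀ (norm_nonneg _) (norm_nonneg _)).mp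
    (Complex.ofReal_injective (by simpa using! h))

/-- For `y` in both algebras `Δ̂(y) = 1 ⊗ y` up to a flip, so that invariance of the Haar state
makes every `⟪η, y ξ⟫` a multiple of `⟪η, ξ⟫`. -/
lemma eq_phihat_smul_one {y : B H} (hyM : y ∈ Q.M) (hy : y ∈ Q.Mhat) : y = Q.phihat y • 1 := by
  have hDelta : star Q.W * Q.tensorOp 1 y * Q.W = Q.tensorOp y 1 := by
    rw [Q.Delta_V y hyM, (Q.V_mem y hy 1 (one_mem _)).eq, mul_assoc, Q.V_unitary_r, mul_one]
  have hdual : Q.dualDelta y = Q.tensorOp 1 y :=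
    calc Q.dualDelta y = (Q.W * star Q.W) * Q.tensorOp 1 y * (Q.W * star Q.W) := by
          rw [LCQG.dualDelta, ← hDelta]; simp only [mul_assoc]
      _ = Q.tensorOp 1 y := by rw [Q.W_unitary_r, one_mul, mul_one]
  have hslice (ξ η : H) : Q.rightSlice ξ η (Q.tensorOp 1 y) = ⟪η, y ξ⟫ • (1 : B H) :=
    ContinuousLinearMap.ext fun ν => ext_inner_left ℂ fun μ => by
      rw [LCQG.inner_rightSlice, Q.tensorOp_apply, Q.tmul_inner, one_apply_eq_self,
        _root_.smul_apply, inner_smul_right, one_apply_eq_self, mul_comm]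
  refine ContinuousLinearMap.ext fun ξ => ext_inner_left ℂ fun η => ?_
  have hinv := Q.phihat_rightSlice_dualDelta ξ η hy
  rw [hdual, hslice, map_smul, Q.phihat_state.1, smul_eq_mul, mul_one] at hinv
  rw [hinv, _root_.smul_apply, inner_smul_right, one_apply_eq_self, mul_comm]

/-- Right invariance and traciality of the Haar state, evaluated at its trace vector. -/
lemma inner_dualDelta_traceVector {a b : B H} (ha : a ∈ Q.Mhat) (hb : b ∈ Q.Mhat) (ξ η : H) :
    ⟪Q.dualDelta a (Q.tmul η Q.traceVector), Q.dualDelta b (Q.tmul ξ Q.traceVector)⟫ =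
      ⟪η, ξ⟫ * ⟪star b Q.traceVector, star a Q.traceVector⟫ := by
  have hab : star a * b ∈ Q.Mhat := mul_mem (star_mem ha) hb
  rw [← inner_apply_star, Q.star_dualDelta, ← mul_apply_eq_comp, ← Q.dualDelta_mul,
    ← LCQG.inner_leftSlice, ← Q.phihat_eq_inner_traceVector (Q.leftSlice_dualDelta_mem _ _ hab),
    Q.phihat_leftSlice_dualDelta _ _ hab, Q.phihat_eq_inner_traceVector hab, mul_apply_eq_comp,
    Q.inner_apply_apply_traceVector_comm (star_mem ha) hb, inner_star_apply]

end DiscreteKacQG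

end QuantumGroup

section OrthogonalFamilies

open ContinuousLinearMap

variable {ι E G : Type*} [NormedAddCommGroup E] [InnerProductSpace ℂ E] [CompleteSpace E]
  [NormedAddCommGroup G] [InnerProductSpace ℂ G] [CompleteSpace G] {V : ι → G →ₗᵢ[ℂ] E}

lemma apply_adjoint_of_norm_adjoint (L : G →ₗᵢ[ℂ] E) {x : E}
    (hx : ‖adjoint L.toContinuousLinearMap x‖ = ‖x‖) :
    L (adjoint L.toContinuousLinearMap x) = x := by
  have hinner : ⟪L (adjoint L.toContinuousLinearMap x), x⟫ = (‖x‖ : ℂ) ^ 2 := by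
    rw [← hx, ← LinearIsometry.coe_toContinuousLinearMap, ← adjoint_inner_right]
    exact inner_self_eq_norm_sq_to_K _
  refine sub_eq_zero.mp (norm_eq_zero.mp (pow_eq_zero_iff two_ne_zero |>.mp ?_))
  rw [@norm_sub_sq ℂ, hinner, L.norm_map, hx, ← Complex.ofReal_pow, RCLike.re_to_complex,
    Complex.ofReal_re]
  ring

lemma adjoint_linearIsometry_apply (hV : OrthogonalFamily ℂ (fun _ => G) V) (x : E) (i : ι) :
    adjoint hV.linearIsometry.toContinuousLinearMap x i =
      adjoint (V i).toContinuousLinearMap x := by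
  classical
  refine ext_inner_left ℂ fun u => ?_
  calc ⟪u, adjoint hV.linearIsometry.toContinuousLinearMap x i⟫
      = ⟪lp.single 2 i u, adjoint hV.linearIsometry.toContinuousLinearMap x⟫ :=
        (lp.inner_single_left (𝕜 := ℂ) (G := fun _ : ι => G) i u _).symm
    _ = ⟪u, adjoint (V i).toContinuousLinearMap x⟫ := by
        rw [adjoint_inner_right, LinearIsometry.coe_toContinuousLinearMap,
          hV.linearIsometry_apply_single, adjoint_inner_right,
          LinearIsometry.coe_toContinuousLinearMap]

lemma hasSum_norm_sq_adjoint (hV : OrthogonalFamily ℂ (fun _ => G) V) (x : E) :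
    HasSum (fun i => ‖adjoint (V i).toContinuousLinearMap x‖ ^ 2)
      (‖adjoint hV.linearIsometry.toContinuousLinearMap x‖ ^ 2) := by
  simpa [adjoint_linearIsometry_apply] using
    lp.hasSum_norm (by norm_num) (adjoint hV.linearIsometry.toContinuousLinearMap x)

lemma sum_norm_sq_adjoint_le (hV : OrthogonalFamily ℂ (fun _ => G) V) (x : E) (F : Finset ι) :
    ∑ i ∈ F, ‖adjoint (V i).toContinuousLinearMap x‖ ^ 2 ≤ ‖x‖ ^ 2 := by
  refine (sum_le_hasSum F (fun i _ => by positivity) (hasSum_norm_sq_adjoint hV x)).trans ?_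
  gcongr
  grw [le_opNorm, LinearIsometryEquiv.norm_map, LinearIsometry.norm_toContinuousLinearMap_le,
    one_mul]

lemma hasSum_inner_adjoint (hV : OrthogonalFamily ℂ (fun _ => G) V) {x : E}
    (hx : hV.linearIsometry (adjoint hV.linearIsometry.toContinuousLinearMap x) = x) (y : E) :
    HasSum (fun i => ⟪adjoint (V i).toContinuousLinearMap x,
      adjoint (V i).toContinuousLinearMap y⟫) ⟪x, y⟫ := by
  have h := lp.hasSum_inner (𝕜 := ℂ) (adjoint hV.linearIsometry.toContinuousLinearMap x)
    (adjoint hV.linearIsometry.toContinuousLinearMap y)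
  rw [adjoint_inner_right, LinearIsometry.coe_toContinuousLinearMap, hx] at h
  exact h.congr_fun fun i => by rw [adjoint_linearIsometry_apply, adjoint_linearIsometry_apply]

lemma linearIsometry_adjoint_apply (hV : OrthogonalFamily ℂ (fun _ => G) V) {x : E}
    (hx : HasSum (fun i => ‖adjoint (V i).toContinuousLinearMap x‖ ^ 2) (‖x‖ ^ 2)) :
    hV.linearIsometry (adjoint hV.linearIsometry.toContinuousLinearMap x) = x :=
  apply_adjoint_of_norm_adjoint _ <| (sq_eq_sq₀ (norm_nonneg _) (norm_nonneg _)).mp <|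
    (hasSum_norm_sq_adjoint hV x).unique hx

end OrthogonalFamilies

section IsometricMatrices

open ContinuousLinearMap

open scoped Matrix

variable {ι K : Type*} [DecidableEq ι] [NormedAddCommGroup K] [InnerProductSpace ℂ K]

/-- A possibly infinite matrix of operators whose columns are isometries with pairwise orthogonal
ranges: `∑ᵢ Tᵢⱼ* Tᵢₖ = δⱼₖ` weakly. -/
def IsIsometricMatrix (T : Matrix ι ι (B K)) : Prop :=
  ∀ j k u v, HasSum (fun i => ⟪T i j u, T i k v⟫) (if j = k then ⟪u, v⟫ else 0)

namespace IsIsometricMatrix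

variable {S T : Matrix ι ι (B K)}

lemma hasSum_norm_sq (hT : IsIsometricMatrix T) (j : ι) (u : K) :
    HasSum (fun i => ‖T i j u‖ ^ 2) (‖u‖ ^ 2) := by
  simpa [inner_self_eq_norm_sq_to_K, ← Complex.ofReal_pow, Complex.hasSum_ofReal] using hT j j u u

lemma summable_norm_sq_apply (hT : IsIsometricMatrix T) {κ : Type*} {a : κ → K}
    (ha : Summable fun l => ‖a l‖ ^ 2) (j : ι) :
    Summable fun p : κ × ι => ‖T p.2 j (a p.1)‖ ^ 2 :=
  (summable_prod_of_nonneg fun p => by positivity).mpr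
    ⟨fun l => (hT.hasSum_norm_sq j (a l)).summable, by
      simpa only [(hT.hasSum_norm_sq j _).tsum_eq] using ha⟩

/-- The `j`-th column of an isometric matrix. -/
def column (hT : IsIsometricMatrix T) (j : ι) : K →ₗᵢ[ℂ] lp (fun _ : ι => K) 2 :=
  LinearMap.isometryOfInner
    { toFun u := ⟨fun i => T i j u, memℓp_gen (by simpa using (hT.hasSum_norm_sq j u).summable)⟩
      map_add' u v := lp.ext <| funext fun i => map_add (T i j) u v
      map_smul' c u := lp.ext <| funext fun i => map_smul (T i j) c u }
    fun u v => (lp.hasSum_inner _ _).unique (by simpa using hT j j u v)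

lemma column_apply (hT : IsIsometricMatrix T) (j : ι) (u : K) (i : ι) :
    hT.column j u i = T i j u := rfl

lemma orthogonalFamily_column (hT : IsIsometricMatrix T) :
    OrthogonalFamily ℂ (fun _ => K) hT.column := fun j k hjk u v =>
  (lp.hasSum_inner _ _).unique (by simpa [column_apply, hjk] using hT j k u v)

variable [CompleteSpace K]

/-- The `(k, j)` entry `∑ᵢ Tᵢₖ* Sᵢⱼ` of the product `T* S` of isometric matrices. -/
def adjointMul (hT : IsIsometricMatrix T) (hS : IsIsometricMatrix S) (k j : ι) : B K :=
  adjoint (hT.column k).toContinuousLinearMap ∘L (hS.column j).toContinuousLinearMap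

variable (hT : IsIsometricMatrix T) (hS : IsIsometricMatrix S) (i j k : ι) (u v : K)

lemma hasSum_inner_adjointMul :
    HasSum (fun i => ⟪T i k u, S i j v⟫) ⟪u, hT.adjointMul hS k j v⟫ := by
  rw [adjointMul, ContinuousLinearMap.comp_apply, adjoint_inner_right]
  exact lp.hasSum_inner _ _

lemma commute_adjointMul {X : B K} (hTX : ∀ i, Commute (T i k) (star X))
    (hSX : ∀ i, Commute (S i j) X) : Commute (hT.adjointMul hS k j) X := by
  refine ContinuousLinearMap.ext fun v => ext_inner_left ℂ fun u => ?_
  refine (hT.hasSum_inner_adjointMul hS j k u (X v)).unique ?_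
  rw [mul_apply_eq_comp, ← inner_star_apply]
  convert hT.hasSum_inner_adjointMul hS j k (star X u) v using 2 with i
  rw [← mul_apply_eq_comp, (hSX i).eq, mul_apply_eq_comp, ← inner_star_apply, ← mul_apply_eq_comp,
    ← (hTX i).eq, mul_apply_eq_comp]

lemma sum_norm_sq_adjointMul_le (F : Finset ι) :
    ∑ k ∈ F, ‖hT.adjointMul hS k j u‖ ^ 2 ≤ ‖u‖ ^ 2 :=
  (hS.column j).norm_map u ▸ sum_norm_sq_adjoint_le hT.orthogonalFamily_column (hS.column j u) F

/-- The columns of `T` also span, so `S = T (T* S)`. -/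
lemma hasSum_inner_star_adjointMul (hT' : IsIsometricMatrix Tᴴ) :
    HasSum (fun k => ⟪star (T i k) v, hT.adjointMul hS k j u⟫) ⟪v, S i j u⟫ := by
  have hadjoint (k : ι) :
      adjoint (hT.column k).toContinuousLinearMap (lp.single 2 i v) = star (T i k) v :=
    ext_inner_right ℂ fun w => by
      rw [adjoint_inner_left, lp.inner_single_left, inner_star_apply]; rfl
  have h := hasSum_inner_adjoint hT.orthogonalFamily_column (x := lp.single 2 i v)
    (linearIsometry_adjoint_apply _ (by simpa [hadjoint] using! hT'.hasSum_norm_sq i v))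
    (hS.column j u)
  simpa only [hadjoint, lp.inner_single_left] using! h

end IsIsometricMatrix

end IsometricMatrices

section Coefficients

open ContinuousLinearMap

open scoped Matrix

variable {ι H H2 : Type*}
  [NormedAddCommGroup H] [InnerProductSpace ℂ H] [CompleteSpace H]
  [NormedAddCommGroup H2] [InnerProductSpace ℂ H2] [CompleteSpace H2]

lemma hasSum_iterated_comm {α κ : Type*} {f : κ × α → ℂ} (hf : Summable f) {g : κ → ℂ} {h : α → ℂ}
    {a : ℂ} (hg : ∀ l, HasSum (fun i => f (l, i)) (g l))
    (hh : ∀ i, HasSum (fun l => f (l, i)) (h i)) (ha : HasSum g a) : HasSum h a := by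
  rw [ha.unique (hf.hasSum.prod_fiberwise hg)]
  exact HasSum.prod_fiberwise ((Equiv.prodComm α κ).hasSum_iff.mpr hf.hasSum) hh

namespace LCQG

variable (Q : LCQG H H2)

lemma inner_createLeft (ξ η b c : H) :
    ⟪Q.createLeft ξ b, Q.createLeft η c⟫ = ⟪ξ, η⟫ * ⟪b, c⟫ :=
  Q.tmul_inner ξ b η c

lemma adjoint_createLeft_tmul (ξ a b : H) :
    adjoint (Q.createLeft ξ) (Q.tmul a b) = ⟪ξ, a⟫ • b :=
  ext_inner_left ℂ fun μ => by
    rw [adjoint_inner_right, createLeft_apply, Q.tmul_inner, inner_smul_right]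

lemma adjoint_createRight_tensorOp (ξ : H) (y : B H) (u : H2) :
    adjoint (Q.createRight ξ) (Q.tensorOp y 1 u) = y (adjoint (Q.createRight ξ) u) :=
  ext_inner_left ℂ fun μ => by
    rw [adjoint_inner_right, createRight_apply, ← inner_star_apply, star_tensorOp,
      Q.tensorOp_apply, star_one, one_apply_eq_self, ← createRight_apply, ← adjoint_inner_right,
      inner_star_apply]

lemma flipU_flipU (u : H2) : Q.flipU (Q.flipU u) = u :=
  DFunLike.congr_fun (Q.ext_tmul (S := Q.flipU ∘L Q.flipU) (T := .id ℂ H2) fun a b => by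
    simp only [ContinuousLinearMap.comp_apply, Q.flipU_apply, id_apply]) u

lemma adjoint_createRight_apply (ξ : H) (u : H2) :
    adjoint (Q.createRight ξ) u = adjoint (Q.createLeft ξ) (Q.flipU u) :=
  ext_inner_left ℂ fun μ => by
    rw [adjoint_inner_right, adjoint_inner_right, createLeft_apply, createRight_apply,
      ← inner_star_apply, star_flipU, Q.flipU_apply]

lemma hasSum_inner_adjoint_createLeft (e : HilbertBasis ι ℂ H) (u v : H2) :
    HasSum (fun i => ⟪adjoint (Q.createLeft (e i)) u, adjoint (Q.createLeft (e i)) v⟫) ⟪u, v⟫ := by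
  let V (i : ι) : H →ₗᵢ[ℂ] H2 := (Q.createLeft (e i)).toLinearMap.isometryOfInner fun b c => by
    rw [coe_coe, inner_createLeft, inner_self_eq_norm_sq_to_K, e.orthonormal.norm_eq_one]
    simp
  have hV : OrthogonalFamily ℂ (fun _ => H) V := fun i j hij b c =>
    (Q.inner_createLeft (e i) (e j) b c).trans (by rw [e.orthonormal.inner_eq_zero hij, zero_mul])
  have hspan (a b : H) : hV.linearIsometry (adjoint hV.linearIsometry.toContinuousLinearMap
      (Q.tmul a b)) = Q.tmul a b := by
    refine linearIsometry_adjoint_apply hV ?_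
    suffices HasSum (fun i => ‖adjoint (Q.createLeft (e i)) (Q.tmul a b)‖ ^ 2)
      (‖Q.tmul a b‖ ^ 2) from this
    have he : HasSum (fun i => ‖⟪e i, a⟫‖ ^ 2) (‖a‖ ^ 2) := by
      simpa [e.repr_apply_apply] using lp.hasSum_norm (by norm_num) (e.repr a)
    simpa only [adjoint_createLeft_tmul, norm_smul, norm_tmul, mul_pow] using he.mul_right (‖b‖ ^ 2)
  refine hasSum_inner_adjoint hV (DFunLike.congr_fun (Q.ext_tmul (S :=
    hV.linearIsometry.toContinuousLinearMap ∘L adjoint hV.linearIsometry.toContinuousLinearMap)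
    (T := .id ℂ H2) hspan) u) v

lemma hasSum_inner_adjoint_createRight (e : HilbertBasis ι ℂ H) (u v : H2) :
    HasSum (fun i => ⟪adjoint (Q.createRight (e i)) u, adjoint (Q.createRight (e i)) v⟫)
      ⟪u, v⟫ := by
  have h := Q.hasSum_inner_adjoint_createLeft e (Q.flipU u) (Q.flipU v)
  rw [← inner_star_apply, star_flipU, flipU_flipU] at h
  simpa only [adjoint_createRight_apply] using h

/-- The matrix of coefficients `(ω_{eⱼ,eᵢ} ⊗ id)(X)` of an operator on `H2` with respect to a family
of vectors in the left leg. -/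
def coeffMatrix (e : ι → H) (X : B H2) : Matrix ι ι (B H) :=
  .of fun i j => Q.leftSlice (e j) (e i) X

lemma coeffMatrix_apply (e : ι → H) (X : B H2) (i j : ι) :
    Q.coeffMatrix e X i j = Q.leftSlice (e j) (e i) X := rfl

lemma conjTranspose_coeffMatrix (e : ι → H) (X : B H2) :
    (Q.coeffMatrix e X)ᴴ = Q.coeffMatrix e (star X) :=
  Matrix.ext fun i j => Q.star_leftSlice (e i) (e j) X

lemma hasSum_inner_leftSlice (e : HilbertBasis ι ℂ H) (X Y : B H2) (ξ η u v : H) :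
    HasSum (fun i => ⟪Q.leftSlice ξ (e i) X u, Q.leftSlice η (e i) Y v⟫)
      ⟪X (Q.tmul ξ u), Y (Q.tmul η v)⟫ :=
  Q.hasSum_inner_adjoint_createLeft e (X (Q.tmul ξ u)) (Y (Q.tmul η v))

lemma hasSum_inner_leftSlice_Delta (e : HilbertBasis ι ℂ H) (ξ η μ ν : H) (y : B H) :
    HasSum (fun i => ⟪Q.leftSlice η (e i) Q.W μ, y (Q.leftSlice ξ (e i) Q.W ν)⟫)
      ⟪μ, Q.leftSlice ξ η (Q.Delta y) ν⟫ := by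
  have h := Q.hasSum_inner_leftSlice e Q.W (Q.tensorOp 1 y * Q.W) η ξ μ ν
  simp only [leftSlice_one_tensorOp_mul] at h
  rwa [← inner_apply_star, ← mul_apply_eq_comp, ← mul_assoc, ← inner_leftSlice] at h

variable [DecidableEq ι]

lemma isIsometricMatrix_coeffMatrix (e : HilbertBasis ι ℂ H) {X : B H2} (hX : star X * X = 1) :
    IsIsometricMatrix (Q.coeffMatrix e X) := fun j k u v => by
  have h := Q.hasSum_inner_leftSlice e X X (e j) (e k) u v
  rwa [(inner_map_map_iff_adjoint_comp_self X).mpr hX, Q.tmul_inner,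
    orthonormal_iff_ite.mp e.orthonormal j k, ite_mul, one_mul, zero_mul] at h

end LCQG

namespace IsIsometricMatrix

variable [DecidableEq ι] {T : Matrix ι ι (B H)}

lemma map_tensorOp_one (hT : IsIsometricMatrix T) (Q : LCQG H H2) :
    IsIsometricMatrix (T.map (Q.tensorOp · 1)) := fun j k u v => by
  obtain ⟨s, e, -⟩ := exists_hilbertBasis ℂ H
  have hsq (w : H2) : Summable fun l => ‖adjoint (Q.createRight (e l)) w‖ ^ 2 := by
    simpa [inner_self_eq_norm_sq_to_K, ← Complex.ofReal_pow, Complex.summable_ofReal] using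
      (Q.hasSum_inner_adjoint_createRight e w w).summable
  let f (p : s × ι) : ℂ := ⟪T p.2 j (adjoint (Q.createRight (e p.1)) u),
    T p.2 k (adjoint (Q.createRight (e p.1)) v)⟫
  have hf : Summable f := .of_norm_bounded (summable_norm_mul_norm
    (hT.summable_norm_sq_apply (hsq v) k) (hT.summable_norm_sq_apply (hsq u) j))
    fun p => norm_inner_le_norm _ _
  have hi (i : ι) : HasSum (fun l => f (l, i))
      ⟪Q.tensorOp (T i j) 1 u, Q.tensorOp (T i k) 1 v⟫ := by
    simpa only [LCQG.adjoint_createRight_tensorOp] using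
      Q.hasSum_inner_adjoint_createRight e (Q.tensorOp (T i j) 1 u) (Q.tensorOp (T i k) 1 v)
  have hl (l : s) :=
    hT j k (adjoint (Q.createRight (e l)) u) (adjoint (Q.createRight (e l)) v)
  refine hasSum_iterated_comm hf hl hi ?_
  split_ifs
  exacts [Q.hasSum_inner_adjoint_createRight e u v, hasSum_zero]

lemma map_dualDelta (hT : IsIsometricMatrix T) (Q : LCQG H H2) :
    IsIsometricMatrix (T.map Q.dualDelta) := fun j k u v => by
  have hW (x y : H2) : ⟪Q.W x, Q.W y⟫ = ⟪x, y⟫ :=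
    (inner_map_map_iff_adjoint_comp_self Q.W).mpr Q.W_unitary_l x y
  have hW' : ⟪star Q.W u, star Q.W v⟫ = ⟪u, v⟫ :=
    (inner_map_map_iff_adjoint_comp_self (star Q.W)).mpr (by
      rw [← star_eq_adjoint, star_star]; exact Q.W_unitary_r) u v
  exact hW' ▸ (hT.map_tensorOp_one Q j k (star Q.W u) (star Q.W v)).congr_fun fun i => hW _ _

end IsIsometricMatrix

end Coefficients

section Pentagon

open ContinuousLinearMap

open scoped Matrix

variable {ι H H2 : Type*} [DecidableEq ι]
  [NormedAddCommGroup H] [InnerProductSpace ℂ H] [CompleteSpace H]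
  [NormedAddCommGroup H2] [InnerProductSpace ℂ H2] [CompleteSpace H2]

namespace LCQG

variable (Q : LCQG H H2)

lemma eq_one_tensorOp_leftSlice {X : B H2} {x : H} (hx : ‖x‖ = 1)
    (hX : ∀ ξ η, ∃ c : ℂ, Q.rightSlice ξ η X = c • 1) : X = Q.tensorOp 1 (Q.leftSlice x x X) :=
  Q.ext_inner_apply_tmul fun a b c d => by
    obtain ⟨z, hz⟩ := hX d b
    have hslice (μ ν : H) : ⟪Q.tmul μ b, X (Q.tmul ν d)⟫ = z * ⟪μ, ν⟫ := by
      rw [← inner_rightSlice, hz, _root_.smul_apply, one_apply_eq_self,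
        inner_smul_right]
    rw [Q.tensorOp_apply, Q.tmul_inner, inner_leftSlice, hslice, hslice,
      inner_self_eq_norm_sq_to_K, hx, one_apply_eq_self]
    simp [mul_comm]

variable (e : HilbertBasis ι ℂ H) (j k : ι)

lemma isIsometricMatrix_W : IsIsometricMatrix (Q.coeffMatrix e Q.W) :=
  Q.isIsometricMatrix_coeffMatrix e Q.W_unitary_l

lemma isIsometricMatrix_conjTranspose_W : IsIsometricMatrix (Q.coeffMatrix e Q.W)ᴴ := by
  rw [conjTranspose_coeffMatrix]
  exact Q.isIsometricMatrix_coeffMatrix e (by rw [star_star, Q.W_unitary_r])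

/-- The `(k, j)` coefficient, in the first leg, of `δ₂₃(W₁₂)* W₁₂` with `δ = dualDelta`; it is the
`(k, j)` coefficient of `W₁₃*` when `W` satisfies the pentagon equation. -/
def pentagonCoeff (k j : ι) : B H2 :=
  ((Q.isIsometricMatrix_W e).map_dualDelta Q).adjointMul
    ((Q.isIsometricMatrix_W e).map_tensorOp_one Q) k j

lemma rightSlice_star_W_mul_pentagonCoeff (ξ η : H) :
    Q.rightSlice ξ η (star Q.W * Q.pentagonCoeff e k j) =
      Q.leftSlice (e j) (e k) (Q.Delta (Q.rightSlice ξ η (star Q.W))) := by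
  refine ContinuousLinearMap.ext fun ν => ext_inner_left ℂ fun μ => ?_
  rw [inner_rightSlice, mul_apply_eq_comp, inner_apply_star]
  refine (IsIsometricMatrix.hasSum_inner_adjointMul _ _ j k _ _).unique ?_
  refine (Q.hasSum_inner_leftSlice_Delta e (e j) (e k) μ ν _).congr_fun fun i => ?_
  have hδ (y : B H) : Q.dualDelta y (Q.W (Q.tmul μ η)) = Q.W (Q.tmul (y μ) η) := by
    rw [dualDelta, mul_apply_eq_comp, ← mul_apply_eq_comp (star Q.W), Q.W_unitary_l,
      one_apply_eq_self, mul_apply_eq_comp, Q.tensorOp_apply, one_apply_eq_self]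
  rw [Matrix.map_apply, Matrix.map_apply, hδ, Q.tensorOp_apply, one_apply_eq_self,
    ← inner_apply_star, ← inner_rightSlice]
  rfl

lemma commute_pentagonCoeff_tensorOp_one {y : B H} (hy : y ∈ Q.M.commutant) :
    Commute (Q.pentagonCoeff e k j) (Q.tensorOp y 1) := by
  have hstar : Commute (star Q.W * Q.pentagonCoeff e k j) (Q.tensorOp y 1) :=
    Q.commute_tensorOp_one_iff.mpr fun ξ η => by
      rw [rightSlice_star_W_mul_pentagonCoeff]
      exact commute_of_mem_of_mem_commutant
        (Q.leftSlice_Delta_mem _ _ (Q.rightSlice_star_W_mem ξ η)) hy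
  have h := (Q.commute_W_tensorOp_one hy).mul_left hstar
  rwa [← mul_assoc, Q.W_unitary_r, one_mul] at h

end LCQG

namespace DiscreteKacQG

variable (Q : DiscreteKacQG H H2) (e : HilbertBasis ι ℂ H) (j k : ι)

lemma commute_pentagonCoeff_tensorOp_one_of_mem_commutant {y : B H} (hy : y ∈ Q.Mhat.commutant) :
    Commute (Q.pentagonCoeff e k j) (Q.tensorOp y 1) := by
  refine IsIsometricMatrix.commute_adjointMul _ _ j k (fun i => ?_) fun i => ?_
  · rw [LCQG.star_tensorOp, star_one]
    exact Q.commute_tensorOp_one_iff.mpr fun ξ η => commute_of_mem_of_mem_commutant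
      (Q.rightSlice_dualDelta_mem ξ η (Q.leftSlice_W_mem _ _)) (star_mem hy)
  · exact Q.commute_tensorOp (commute_of_mem_of_mem_commutant (Q.leftSlice_W_mem _ _) hy) (.refl 1)

lemma commute_pentagonCoeff_one_tensorOp {y : B H} (hy : y ∈ Q.Mhat.commutant) :
    Commute (Q.pentagonCoeff e k j) (Q.tensorOp 1 y) := by
  refine IsIsometricMatrix.commute_adjointMul _ _ j k (fun i => ?_) fun i => ?_
  · rw [LCQG.star_tensorOp, star_one]
    exact Q.commute_one_tensorOp_iff.mpr fun ξ η => commute_of_mem_of_mem_commutant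
      (Q.leftSlice_dualDelta_mem ξ η (Q.leftSlice_W_mem _ _)) (star_mem hy)
  · exact Q.commute_tensorOp (.one_right _) (.one_left y)

/-- The second tensor factor of `pentagonCoeff`, which is of the form `1 ⊗ s`. -/
def pentagonFactor (k j : ι) : B H :=
  Q.leftSlice Q.traceVector Q.traceVector (Q.pentagonCoeff e k j)

lemma pentagonFactor_mem : Q.pentagonFactor e k j ∈ Q.Mhat :=
  mem_of_forall_commute_commutant fun _ hy =>
    Q.commute_one_tensorOp_iff.mp (Q.commute_pentagonCoeff_one_tensorOp e j k hy) _ _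

lemma pentagonCoeff_eq_one_tensorOp :
    Q.pentagonCoeff e k j = Q.tensorOp 1 (Q.pentagonFactor e k j) :=
  Q.eq_one_tensorOp_leftSlice Q.norm_traceVector fun ξ η =>
    ⟨_, Q.eq_phihat_smul_one
      (mem_of_forall_commute_commutant fun _ hy =>
        Q.commute_tensorOp_one_iff.mp (Q.commute_pentagonCoeff_tensorOp_one e j k hy) ξ η)
      (mem_of_forall_commute_commutant fun _ hy => Q.commute_tensorOp_one_iff.mp
        (Q.commute_pentagonCoeff_tensorOp_one_of_mem_commutant e j k hy) ξ η)⟩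

end DiscreteKacQG

end Pentagon

section RowContraction

open scoped Matrix

variable {ι : Type*}

lemma norm_sq_le_of_hasSum_inner {K : Type*} [NormedAddCommGroup K] [InnerProductSpace ℂ K]
    {x y : ι → K} {s : ℂ} {a b : ℝ} (hs : HasSum (fun k => ⟪x k, y k⟫) s)
    (hx : ∀ F : Finset ι, ∑ k ∈ F, ‖x k‖ ^ 2 ≤ a) (hy : ∀ F : Finset ι, ∑ k ∈ F, ‖y k‖ ^ 2 ≤ b) :
    ‖s‖ ^ 2 ≤ a * b := by
  refine le_of_tendsto (hs.norm.pow 2) (.of_forall fun F => ?_)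
  calc ‖∑ k ∈ F, ⟪x k, y k⟫‖ ^ 2 ≤ (∑ k ∈ F, ‖x k‖ * ‖y k‖) ^ 2 := by
        gcongr
        exact norm_sum_le_of_le F fun k _ => norm_inner_le_norm _ _
    _ ≤ (∑ k ∈ F, ‖x k‖ ^ 2) * ∑ k ∈ F, ‖y k‖ ^ 2 := Finset.sum_mul_sq_le_sq_mul_sq ..
    _ ≤ a * b := by
        have ha : 0 ≤ a := by simpa using hx ∅
        gcongr
        exacts [hx F, hy F]

namespace DiscreteKacQG

variable {H H2 : Type*}
  [NormedAddCommGroup H] [InnerProductSpace ℂ H] [CompleteSpace H]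
  [NormedAddCommGroup H2] [InnerProductSpace ℂ H2] [CompleteSpace H2]
  (Q : DiscreteKacQG H H2) (e : HilbertBasis ι ℂ H) (i j : ι)

lemma sum_norm_sq_star_pentagonFactor_le [DecidableEq ι] (F : Finset ι) :
    ∑ k ∈ F, ‖star (Q.pentagonFactor e k j) Q.traceVector‖ ^ 2 ≤ 1 := by
  have hnorm (k : ι) : ‖Q.pentagonCoeff e k j (Q.tmul Q.traceVector Q.traceVector)‖ =
      ‖star (Q.pentagonFactor e k j) Q.traceVector‖ := by
    rw [pentagonCoeff_eq_one_tensorOp, Q.tensorOp_apply, LCQG.norm_tmul, one_apply_eq_self,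
      Q.norm_traceVector, one_mul, Q.norm_star_apply_traceVector (Q.pentagonFactor_mem e j k)]
  simp only [← hnorm]
  refine (IsIsometricMatrix.sum_norm_sq_adjointMul_le _ _ j _ F).trans_eq ?_
  rw [LCQG.norm_tmul, Q.norm_traceVector, mul_one, one_pow]

lemma hasSum_norm_sq_sum_dualDelta (F : Finset ι) (ζ : ι → H) :
    HasSum (fun k => ‖∑ i ∈ F,
      Q.dualDelta (Q.leftSlice (e k) (e i) Q.W) (Q.tmul (ζ i) Q.traceVector)‖ ^ 2)
      (∑ i ∈ F, ‖ζ i‖ ^ 2) := by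
  classical
  have hsum : HasSum (fun k => ∑ i ∈ F, ∑ l ∈ F,
      ⟪ζ i, ζ l⟫ * ⟪star (Q.leftSlice (e k) (e l) Q.W) Q.traceVector,
        star (Q.leftSlice (e k) (e i) Q.W) Q.traceVector⟫) (∑ i ∈ F, ⟪ζ i, ζ i⟫) := by
    refine hasSum_sum fun i hi => ?_
    have h := hasSum_sum (s := F) fun l _ =>
      (Q.isIsometricMatrix_conjTranspose_W e l i Q.traceVector Q.traceVector).mul_left ⟪ζ i, ζ l⟫
    simp only [inner_self_eq_norm_sq_to_K, Q.norm_traceVector, mul_ite, mul_zero,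
      Finset.sum_ite_eq', hi, if_true] at h ⊢
    simpa [LCQG.coeffMatrix_apply] using h
  refine Complex.hasSum_ofReal.mp ?_
  push_cast
  simp only [← Complex.coe_algebraMap, ← inner_self_eq_norm_sq_to_K]
  refine hsum.congr_fun fun k => ?_
  simp only [sum_inner, inner_sum,
    Q.inner_dualDelta_traceVector (Q.leftSlice_W_mem _ _) (Q.leftSlice_W_mem _ _)]
  exact Finset.sum_comm

/-- Traciality moves `pentagonFactor` from the right of `δ(wᵢₖ)` to its left. -/
lemma hasSum_inner_star_pentagonFactor [DecidableEq ι] (v ζ : H) :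
    HasSum (fun k => ⟪Q.tmul v (star (Q.pentagonFactor e k j) Q.traceVector),
      Q.dualDelta (Q.leftSlice (e k) (e i) Q.W) (Q.tmul ζ Q.traceVector)⟫)
      ⟪v, Q.leftSlice (e j) (e i) Q.W ζ⟫ := by
  have hT : IsIsometricMatrix ((Q.coeffMatrix e Q.W).map Q.dualDelta)ᴴ := by
    have h := (Q.isIsometricMatrix_conjTranspose_W e).map_dualDelta Q.toLCQG
    rwa [Matrix.conjTranspose_map _ fun y => (Q.star_dualDelta y).symm] at h
  have h : HasSum (fun k => ⟪star (Q.dualDelta (Q.leftSlice (e k) (e i) Q.W))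
      (Q.tmul v Q.traceVector), Q.pentagonCoeff e k j (Q.tmul ζ Q.traceVector)⟫)
      ⟪Q.tmul v Q.traceVector,
        Q.tensorOp (Q.leftSlice (e j) (e i) Q.W) 1 (Q.tmul ζ Q.traceVector)⟫ :=
    ((Q.isIsometricMatrix_W e).map_dualDelta Q.toLCQG).hasSum_inner_star_adjointMul
      ((Q.isIsometricMatrix_W e).map_tensorOp_one Q.toLCQG) i j (Q.tmul ζ Q.traceVector)
      (Q.tmul v Q.traceVector) hT
  have hx0 : ⟪Q.traceVector, Q.traceVector⟫ = 1 := by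
    simp [inner_self_eq_norm_sq_to_K, Q.norm_traceVector]
  rw [Q.tensorOp_apply, Q.tmul_inner, one_apply_eq_self, hx0, mul_one] at h
  refine h.congr_fun fun k => ?_
  rw [pentagonCoeff_eq_one_tensorOp, Q.tensorOp_apply, one_apply_eq_self, inner_star_apply,
    ← LCQG.inner_leftSlice, ← LCQG.inner_leftSlice, inner_star_apply]
  exact (Q.inner_apply_apply_traceVector_comm
    (Q.leftSlice_dualDelta_mem _ _ (Q.leftSlice_W_mem _ _)) (Q.pentagonFactor_mem e j k)).symm

lemma sum_norm_sq_star_leftSlice_W_le (F : Finset ι) (v : H) :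
    ∑ i ∈ F, ‖star (Q.leftSlice (e j) (e i) Q.W) v‖ ^ 2 ≤ ‖v‖ ^ 2 := by
  classical
  set N := ∑ i ∈ F, ‖star (Q.leftSlice (e j) (e i) Q.W) v‖ ^ 2
  have hN : HasSum (fun k => ⟪Q.tmul v (star (Q.pentagonFactor e k j) Q.traceVector),
      ∑ i ∈ F, Q.dualDelta (Q.leftSlice (e k) (e i) Q.W)
        (Q.tmul (star (Q.leftSlice (e j) (e i) Q.W) v) Q.traceVector)⟫) (N : ℂ) := by
    convert hasSum_sum (s := F) fun i _ => Q.hasSum_inner_star_pentagonFactor e i j v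
      (star (Q.leftSlice (e j) (e i) Q.W) v) using 1
    · simp only [inner_sum]
    · simp only [N, ← inner_star_apply, inner_self_eq_norm_sq_to_K]
      push_cast
      rfl
  have hCS : ‖(N : ℂ)‖ ^ 2 ≤ ‖v‖ ^ 2 * N := norm_sq_le_of_hasSum_inner hN
    (fun G => by
      simp only [LCQG.norm_tmul, mul_pow, ← Finset.mul_sum]
      exact mul_le_of_le_one_right (by positivity) (Q.sum_norm_sq_star_pentagonFactor_le e j G))
    fun G => sum_le_hasSum G (fun k _ => by positivity) (Q.hasSum_norm_sq_sum_dualDelta e F _)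
  rw [Complex.norm_real, Real.norm_eq_abs, sq_abs] at hCS
  have hN_nonneg : 0 ≤ N := by positivity
  nlinarith [hN_nonneg, sq_nonneg ‖v‖]

end DiscreteKacQG

end RowContraction

section InvariantMean

open ContinuousLinearMap

lemma linearMap_eq_of_apply_le {A : Type*} [CStarAlgebra A] [PartialOrder A] [StarOrderedRing A]
    {f g : A →ₗ[ℂ] ℂ} (h1 : f 1 = g 1) (hle : ∀ y, 0 ≤ y → f y ≤ g y) : f = g := by
  refine LinearMap.ext_on CStarAlgebra.span_nonneg fun y (hy : 0 ≤ y) => (hle y hy).antisymm ?_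
  have h := hle _ (sub_nonneg.mpr (IsSelfAdjoint.of_nonneg hy).le_algebraMap_norm_self)
  rw [Algebra.algebraMap_eq_smul_one, ← Complex.coe_smul, map_sub, map_sub, map_smul, map_smul, h1]
    at h
  simpa only [sub_le_sub_iff_left] using h

lemma sesqForm_ext {E : Type*} [NormedAddCommGroup E] [NormedSpace ℂ E]
    {f g : E →ₗ⋆[ℂ] E →ₗ[ℂ] ℂ} (h : ∀ x, ‖x‖ = 1 → f x x = g x x) : f = g := by
  have hdiag (x : E) : f x x = g x x := by
    obtain rfl | hx := eq_or_ne x 0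
    · simp only [map_zero]
    · have hunit := h (((‖x‖⁻¹ : ℝ) : ℂ) • x) (by simp [norm_smul, norm_ne_zero_iff.mpr hx])
      simpa [hx] using hunit
  refine LinearMap.ext₂ fun x y => ?_
  have hadd := hdiag (x + y)
  have haddI := hdiag (x + Complex.I • y)
  simp only [map_add, LinearMap.add_apply, map_smul, LinearMap.map_smulₛₗ, LinearMap.smul_apply,
    hdiag, smul_eq_mul, Complex.conj_I] at hadd haddI
  linear_combination (1 / 2) * hadd - (Complex.I / 2) * haddI +
    (1 / 2) * (f x y - g x y + g y x - f y x) * Complex.I_mul_I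

lemma le_of_inner_apply_le {E : Type*} [NormedAddCommGroup E] [InnerProductSpace ℂ E]
    {S T : B E} (h : ∀ u, ⟪u, S u⟫ ≤ ⟪u, T u⟫) : S ≤ T :=
  (isPositive_iff_complex _).mpr fun u => by
    have hu : 0 ≤ ⟪(T - S) u, u⟫ := by
      rw [← inner_conj_symm, _root_.sub_apply, inner_sub_right, starRingEnd_apply, star_nonneg_iff,
        sub_nonneg]
      exact h u
    exact ⟨Complex.ext rfl (Complex.le_def.mp hu).2, (Complex.le_def.mp hu).1⟩

variable {ι H H2 : Type*}
  [NormedAddCommGroup H] [InnerProductSpace ℂ H] [CompleteSpace H]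
  [NormedAddCommGroup H2] [InnerProductSpace ℂ H2] [CompleteSpace H2]

namespace LCQG

variable (Q : LCQG H H2)

lemma Delta_one : Q.Delta 1 = 1 := by
  rw [Delta, tensorOp_one, mul_one, Q.W_unitary_l]

/-- `leftSlice` as a sesquilinear function of its two vectors. -/
def leftSliceForm (X : B H2) : H →ₗ⋆[ℂ] H →ₗ[ℂ] B H :=
  LinearMap.mk₂'ₛₗ _ _ (fun η ξ => Q.leftSlice ξ η X)
    (fun η η' ξ => ContinuousLinearMap.ext fun ν => ext_inner_left ℂ fun μ => by
      simp only [inner_leftSlice, map_add, LinearMap.add_apply, inner_add_left, _root_.add_apply,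
        inner_add_right])
    (fun c η ξ => ContinuousLinearMap.ext fun ν => ext_inner_left ℂ fun μ => by
      simp only [inner_leftSlice, map_smul, LinearMap.smul_apply, inner_smul_left,
        _root_.smul_apply, inner_smul_right])
    (fun η ξ ξ' => ContinuousLinearMap.ext fun ν => ext_inner_left ℂ fun μ => by
      simp only [inner_leftSlice, map_add, LinearMap.add_apply, _root_.add_apply, inner_add_right])
    fun c η ξ => ContinuousLinearMap.ext fun ν => ext_inner_left ℂ fun μ => by
      simp only [inner_leftSlice, map_smul, LinearMap.smul_apply, _root_.smul_apply,
        inner_smul_right, RingHom.id_apply]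

lemma sum_star_mul_mul_le_leftSlice_Delta (e : HilbertBasis ι ℂ H) (ξ : H) (F : Finset ι) {y : B H}
    (hy : 0 ≤ y) :
    ∑ i ∈ F, star (Q.leftSlice ξ (e i) Q.W) * (y * Q.leftSlice ξ (e i) Q.W) ≤
      Q.leftSlice ξ ξ (Q.Delta y) :=
  le_of_inner_apply_le fun u => by
    simp only [_root_.sum_apply, inner_sum, mul_apply_eq_comp, inner_apply_star]
    exact sum_le_hasSum F (fun i _ => ((nonneg_iff_isPositive y).mp hy).inner_nonneg_right _)
      (Q.hasSum_inner_leftSlice_Delta e ξ ξ u u y)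

end LCQG

namespace DiscreteKacQG

variable (Q : DiscreteKacQG H H2)

instance isClosed_Mhat : IsClosed (Q.Mhat.toStarSubalgebra : Set (B H)) := by
  have h := Set.isClosed_centralizer (Set.centralizer Q.Mhat.carrier)
  rwa [Q.Mhat.centralizer_centralizer'] at h

lemma sum_leftSlice_W_mul_star_le_one (e : HilbertBasis ι ℂ H) (j : ι) (F : Finset ι) :
    ∑ i ∈ F, Q.leftSlice (e j) (e i) Q.W * star (Q.leftSlice (e j) (e i) Q.W) ≤ 1 :=
  le_of_inner_apply_le fun v => by
    simp only [_root_.sum_apply, inner_sum, mul_apply_eq_comp, ← inner_star_apply,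
      inner_self_eq_norm_sq_to_K, one_apply_eq_self]
    exact_mod_cast Q.sum_norm_sq_star_leftSlice_W_le e j F v

variable {m : B H →ₚ[ℂ] ℂ}

lemma apply_mul_star_eq_norm_sq (hm : IsHypertrace Q.Mhat.toStarSubalgebra m)
    (hφ : ∀ a ∈ Q.Mhat, m a = Q.phihat a) {a : B H} (ha : a ∈ Q.Mhat) :
    m (a * star a) = ((‖a Q.traceVector‖ ^ 2 : ℝ) : ℂ) := by
  rw [hm a ha, hφ _ (mul_mem (star_mem ha) ha),
    Q.phihat_eq_inner_traceVector (mul_mem (star_mem ha) ha), mul_apply_eq_comp, inner_apply_star,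
    inner_self_eq_norm_sq_to_K]
  norm_cast

lemma apply_sub_le_apply_leftSlice_Delta (hm : IsHypertrace Q.Mhat.toStarSubalgebra m)
    (hφ : ∀ a ∈ Q.Mhat, m a = Q.phihat a) (e : HilbertBasis ι ℂ H) (j : ι) (F : Finset ι) {y : B H}
    (hy : 0 ≤ y) :
    m y - ‖y‖ * (1 - (∑ i ∈ F, ‖Q.leftSlice (e j) (e i) Q.W Q.traceVector‖ ^ 2 : ℝ)) ≤
      m (Q.leftSlice (e j) (e j) (Q.Delta y)) := by
  let w (i : ι) : B H := Q.leftSlice (e j) (e i) Q.W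
  have hw (i : ι) : w i ∈ Q.Mhat := Q.leftSlice_W_mem _ _
  set T := ∑ i ∈ F, w i * star (w i) with hT
  have hT_mem : T ∈ Q.Mhat := sum_mem fun i _ => mul_mem (hw i) (star_mem (hw i))
  have hmT : m T = ((∑ i ∈ F, ‖w i Q.traceVector‖ ^ 2 : ℝ) : ℂ) := by
    simp only [hT, map_sum, Q.apply_mul_star_eq_norm_sq hm hφ (hw _), Complex.ofReal_sum]
  have hm1 : m 1 = 1 := (hφ 1 (one_mem _)).trans Q.phihat_state.1
  have hdefect : m y - m (y * T) ≤ ‖y‖ * (1 - m T) := by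
    simpa only [mul_sub, mul_one, map_sub, hm1] using hm.apply_mul_le hy
      (sub_nonneg.mpr (Q.sum_leftSlice_W_mul_star_le_one e j F)) (sub_mem (one_mem _) hT_mem)
  calc m y - ‖y‖ * (1 - (∑ i ∈ F, ‖w i Q.traceVector‖ ^ 2 : ℝ)) ≤ m (y * T) := by
        rw [← hmT]; exact sub_le_comm.mp hdefect
    _ = m (∑ i ∈ F, star (w i) * (y * w i)) := by
        simp only [hT, Finset.mul_sum, map_sum, hm _ (star_mem (hw _)), mul_assoc]
    _ ≤ m (Q.leftSlice (e j) (e j) (Q.Delta y)) :=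
        m.monotone' (Q.sum_star_mul_mul_le_leftSlice_Delta e (e j) F hy)

lemma apply_le_apply_leftSlice_Delta (hm : IsHypertrace Q.Mhat.toStarSubalgebra m)
    (hφ : ∀ a ∈ Q.Mhat, m a = Q.phihat a) {ξ : H} (hξ : ‖ξ‖ = 1) {y : B H} (hy : 0 ≤ y) :
    m y ≤ m (Q.leftSlice ξ ξ (Q.Delta y)) := by
  classical
  have horth : Orthonormal ℂ ((↑) : ({ξ} : Set H) → H) :=
    ⟨by simpa using hξ, fun x y hxy => absurd (Subsingleton.elim x y) hxy⟩
  obtain ⟨s, e, hs, he⟩ := horth.exists_hilbertBasis_extension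
  obtain ⟨j, rfl⟩ : ∃ j, e j = ξ := ⟨⟨ξ, hs rfl⟩, by rw [he]⟩
  have hcolumn : Filter.Tendsto (fun F : Finset s => ∑ i ∈ F,
      ‖Q.leftSlice (e j) (e i) Q.W Q.traceVector‖ ^ 2) Filter.atTop (nhds 1) := by
    have h := (Q.isIsometricMatrix_W e).hasSum_norm_sq j Q.traceVector
    rwa [Q.norm_traceVector, one_pow] at h
  have hlim : Filter.Tendsto (fun F : Finset s => m y - ‖y‖ * (1 - (∑ i ∈ F,
      ‖Q.leftSlice (e j) (e i) Q.W Q.traceVector‖ ^ 2 : ℝ))) Filter.atTop (nhds (m y)) := by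
    simpa only [Function.comp_def, Complex.ofReal_one, sub_self, mul_zero, sub_zero] using
      ((((Complex.continuous_ofReal.tendsto 1).comp hcolumn).const_sub 1).const_mul
        (‖y‖ : ℂ)).const_sub (m y)
  exact le_of_tendsto hlim (.of_forall fun F =>
    Q.apply_sub_le_apply_leftSlice_Delta hm hφ e j F hy)

lemma apply_leftSlice_Delta_of_norm_eq_one (hm : IsHypertrace Q.Mhat.toStarSubalgebra m)
    (hφ : ∀ a ∈ Q.Mhat, m a = Q.phihat a) {ξ : H} (hξ : ‖ξ‖ = 1) (y : B H) :
    m (Q.leftSlice ξ ξ (Q.Delta y)) = m y := by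
  let f : B H →ₗ[ℂ] ℂ :=
    { toFun y := m (Q.leftSlice ξ ξ (Q.Delta y))
      map_add' x y := by simp only [LCQG.Delta, map_add, mul_add, add_mul]
      map_smul' c x := by
        simp only [LCQG.Delta, map_smul, mul_smul_comm, smul_mul_assoc, RingHom.id_apply] }
  have hone : Q.leftSlice ξ ξ (Q.Delta 1) = 1 :=
    ContinuousLinearMap.ext fun ν => ext_inner_left ℂ fun μ => by
      rw [LCQG.inner_leftSlice, LCQG.Delta_one, one_apply_eq_self, Q.tmul_inner,
        inner_self_eq_norm_sq_to_K, hξ, one_apply_eq_self, RCLike.ofReal_one, one_pow, one_mul]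
  have hf : m.toLinearMap = f := linearMap_eq_of_apply_le (congrArg m hone.symm)
    fun _ hx => Q.apply_le_apply_leftSlice_Delta hm hφ hξ hx
  exact (DFunLike.congr_fun hf y).symm

lemma apply_leftSlice_Delta (hm : IsHypertrace Q.Mhat.toStarSubalgebra m)
    (hφ : ∀ a ∈ Q.Mhat, m a = Q.phihat a) (ξ η : H) (y : B H) :
    m (Q.leftSlice ξ η (Q.Delta y)) = ⟪η, ξ⟫ * m y := by
  have hform : (Q.leftSliceForm (Q.Delta y)).compr₂ₛₗ m.toLinearMap = m y • innerₛₗ ℂ :=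
    sesqForm_ext fun ξ hξ => by
      refine (Q.apply_leftSlice_Delta_of_norm_eq_one hm hφ hξ y).trans ?_
      simp [inner_self_eq_norm_sq_to_K, hξ]
  exact (LinearMap.congr_fun₂ hform η ξ).trans (mul_comm _ _)

lemma isLeftInvariantMean_of_isHypertrace (hm : IsHypertrace Q.Mhat.toStarSubalgebra m)
    (hφ : ∀ a ∈ Q.Mhat, m a = Q.phihat a) : Q.IsLeftInvariantMean m.toLinearMap := by
  refine ⟨⟨(hφ 1 (one_mem _)).trans Q.phihat_state.1,
    fun x _ hx => map_nonneg m ((nonneg_iff_isPositive x).mpr hx)⟩, ?_⟩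
  rintro y - ω ⟨ξ, η, hξ, hη, hω⟩
  have hslice : HasSum (fun n => ⟪η n, ξ n⟫ * m y) (m (Q.sliceL ω (Q.Delta y))) := by
    simpa only [Function.comp_def, Q.apply_leftSlice_Delta hm hφ] using
      (Q.hasSum_sliceL hξ hη hω (Q.Delta y)).map m (map_continuous m)
  exact hslice.unique ((hω 1).mul_right (m y))

lemma exists_isHypertrace (hinj : IsInjectiveVNA H Q.Mhat) :
    ∃ m : B H →ₚ[ℂ] ℂ, IsHypertrace Q.Mhat.toStarSubalgebra m ∧
      ∀ a ∈ Q.Mhat, m a = Q.phihat a := by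
  obtain ⟨E, hE⟩ := hinj
  have hE_pos (x : B H) (hx : 0 ≤ x) : (E x).IsPositive :=
    hE.positive x ((nonneg_iff_isPositive x).mp hx)
  let E' : B H →ₚ[ℂ] B H := .mk₀ E fun x hx => (nonneg_iff_isPositive _).mpr (hE_pos x hx)
  let m : B H →ₚ[ℂ] ℂ := .mk₀ (Q.phihat ∘ₗ E) fun x hx =>
    Q.phihat_state.2 _ (hE.mem_range x) (hE_pos x hx)
  exact ⟨m, isHypertrace_of_tracial (E := E') hE.fixes hE.mem_range Q.phihat_tracial fun _ => rfl,
    fun a ha => congrArg Q.phihat (hE.fixes a ha)⟩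

end DiscreteKacQG

end InvariantMean

/-- If `𝔾` is a discrete quantum group of Kac type and `L∞(𝔾̂)` is an injective von
Neumann algebra, then `𝔾` is amenable. -/
theorem injective_dual_implies_amenable (Q : DiscreteKacQG H H2)
    (hinj : IsInjectiveVNA H Q.Mhat) :
    Q.toLCQG.Amenable := by
  obtain ⟨m, hm, hφ⟩ := Q.exists_isHypertrace hinj
  exact ⟨m.toLinearMap, Q.isLeftInvariantMean_of_isHypertrace hm hφ⟩

end LCQGNote
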